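/- Let Γ be a distance-regular graph with classical parameters (D, b, α, β) and diameter D ≥ 3, and assume its intersection numbers satisfy a₁ = 0 and a₂ ≠ 0. Then Γ is 3-bounded: for all vertices x, y with ∂(x,y) ≤ 3 there exists a regular weak-geodetically closed subgraph of Γ of diameter ∂(x,y) containing x and y. -/

import Mathlib

/-!
Common definitions: distance-regular graphs (via an intersection-number function `p`),
classical parameters, and the sets `B(x,y)`, `A(x,y)`, `C(x,y)`.
The distance `∂` is `SimpleGraph.dist`.
-/

variable {V : Type*}

/-- `Γ` is distance-regular with intersection numbers `p h i j = p^h_{ij}`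
(for indices up to the diameter `D`). -/
def SimpleGraph.IsDistRegularWith (G : SimpleGraph V) (D : ℕ) (p : ℕ → ℕ → ℕ → ℕ) : Prop :=
  ∀ h i j : ℕ, h ≤ D → i ≤ D → j ≤ D → ∀ x y : V, G.dist x y = h →
    {z : V | G.dist x z = i ∧ G.dist y z = j}.ncard = p h i j

/-- The Gaussian bracket `[i] = 1 + b + b² + ⋯ + b^{i-1}`. -/
def gaussBracket (b : ℝ) (i : ℕ) : ℝ := ∑ k ∈ Finset.range i, b ^ k

/-- A distance-regular graph with intersection numbers `p` has classical parameters
`(D, b, α, β)`: `b ∉ {0, -1}`, `c_i = [i](1 + α[i-1])` and `b_i = ([D]-[i])(β - α[i])`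
for `0 ≤ i ≤ D`, where `c_i = p^i_{1,i-1}` and `b_i = p^i_{1,i+1}`. -/
def HasClassicalParams (D : ℕ) (p : ℕ → ℕ → ℕ → ℕ) (b α β : ℝ) : Prop :=
  b ≠ 0 ∧ b ≠ -1 ∧
    (∀ i ≤ D, (p i 1 (i - 1) : ℝ) = gaussBracket b i * (1 + α * gaussBracket b (i - 1))) ∧
    (∀ i ≤ D, (p i 1 (i + 1) : ℝ) =
      (gaussBracket b D - gaussBracket b i) * (β - α * gaussBracket b i))

/-- `B(x,y) = Γ₁(x) ∩ Γ_{∂(x,y)+1}(y)`. -/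
def Bset (G : SimpleGraph V) (x y : V) : Set V :=
  {v | G.dist x v = 1 ∧ G.dist y v = G.dist x y + 1}

/-- `A(x,y) = Γ₁(x) ∩ Γ_{∂(x,y)}(y)`. -/
def Aset (G : SimpleGraph V) (x y : V) : Set V :=
  {v | G.dist x v = 1 ∧ G.dist y v = G.dist x y}

/-- `C(x,y) = Γ₁(x) ∩ Γ_{∂(x,y)-1}(y)`. -/
def Cset (G : SimpleGraph V) (x y : V) : Set V :=
  {v | G.dist x v = 1 ∧ G.dist y v = G.dist x y - 1}

section
open Polynomial Matrix
namespace TB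

section Alg
set_option linter.unusedSectionVars false
variable {V : Type*} [Fintype V] [DecidableEq V]

/-- matrices depending polynomially on `r ^ dist`. -/
noncomputable def Mp (G : SimpleGraph V) (r : ℝ) : ℝ[X] →ₗ[ℝ] Matrix V V ℝ where
  toFun P := Matrix.of fun y z => P.eval (r ^ G.dist y z)
  map_add' P Q := by ext y z; simp
  map_smul' a P := by ext y z; simp

lemma Mp_apply (G : SimpleGraph V) (r : ℝ) (P : ℝ[X]) (y z : V) :
    Mp G r P y z = P.eval (r ^ G.dist y z) := rfl

noncomputable def Pn (G : SimpleGraph V) (r : ℝ) (n : ℕ) : Submodule ℝ (Matrix V V ℝ) :=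
  (Polynomial.degreeLT ℝ n).map (Mp G r)

lemma Pn_mono (G : SimpleGraph V) (r : ℝ) {m n : ℕ} (h : m ≤ n) : Pn G r m ≤ Pn G r n :=
  Submodule.map_mono (Polynomial.degreeLT_mono h)

lemma Mp_symm (G : SimpleGraph V) (r : ℝ) (P : ℝ[X]) : (Mp G r P)ᵀ = Mp G r P := by
  ext y z; simp [Mp_apply, SimpleGraph.dist_comm]

lemma Pn_symm {G : SimpleGraph V} {r : ℝ} {n : ℕ} {M : Matrix V V ℝ} (h : M ∈ Pn G r n) :
    Mᵀ = M := by
  obtain ⟨P, -, rfl⟩ := h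
  exact Mp_symm G r P

lemma Mp_X_pow_mem (G : SimpleGraph V) (r : ℝ) {n m : ℕ} (h : n < m) :
    Mp G r (X ^ n) ∈ Pn G r m := by
  refine ⟨X ^ n, ?_, rfl⟩
  rw [SetLike.mem_coe, Polynomial.mem_degreeLT]
  exact lt_of_le_of_lt (degree_X_pow_le n) (by exact_mod_cast h)

lemma trace_sq_zero {M : Matrix V V ℝ} (hs : Mᵀ = M) (h : (M * M).trace = 0) : M = 0 := by
  have h2 : (Mᴴ * M).trace = 0 := by
    rw [conjTranspose_eq_transpose_of_trivial, hs, h]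
  exact Matrix.trace_conjTranspose_mul_self_eq_zero_iff.mp h2

lemma exists_proj (S : Submodule ℝ (Matrix V V ℝ)) (F : Matrix V V ℝ) :
    ∃ g ∈ S, ∀ M ∈ S, (∑ y, ∑ z, (F - g) y z * M y z) = 0 := by
  let e : Matrix V V ℝ ≃ₗ[ℝ] EuclideanSpace ℝ (V × V) :=
    { toFun := fun M => WithLp.toLp 2 (fun p => M p.1 p.2)
      invFun := fun v => Matrix.of fun y z => v (y, z)
      map_add' := by intros; rfl
      map_smul' := by intros; rfl
      left_inv := by intro M; rfl
      right_inv := by intro v; rfl }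
  let S' : Submodule ℝ (EuclideanSpace ℝ (V × V)) := S.map e.toLinearMap
  have h1 := S'.starProjection_apply_mem (e F)
  obtain ⟨g, hg, hge⟩ := h1
  refine ⟨g, hg, ?_⟩
  intro M hM
  have h2 := S'.sub_starProjection_mem_orthogonal (e F)
  rw [Submodule.mem_orthogonal] at h2
  have h3 := h2 (e M) ⟨M, hM, rfl⟩
  rw [← hge] at h3
  simp only [PiLp.inner_apply] at h3
  rw [Fintype.sum_prod_type] at h3
  rw [← h3]
  apply Finset.sum_congr rfl; intro y _
  apply Finset.sum_congr rfl; intro z _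
  change (F y z - g y z) * M y z = inner ℝ (M y z) (F y z - g y z)
  simp

lemma sum_eq_trace {X Y : Matrix V V ℝ} (hY : Yᵀ = Y) :
    (∑ y, ∑ z, X y z * Y y z) = (X * Y).trace := by
  simp only [Matrix.trace, Matrix.diag_apply, Matrix.mul_apply]
  apply Finset.sum_congr rfl; intro y _
  apply Finset.sum_congr rfl; intro z _
  conv_lhs => rw [← hY, Matrix.transpose_apply]

variable (G : SimpleGraph V) (r : ℝ) (A : Matrix V V ℝ) (θ : ℕ → ℝ)

lemma A_mul_Pn (hA : ∀ n, A * Mp G r (X ^ n) - θ n • Mp G r (X ^ n) ∈ Pn G r n)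
    (n : ℕ) (M : Matrix V V ℝ) (hM : M ∈ Pn G r n) : A * M ∈ Pn G r n := by
  obtain ⟨P, hP, rfl⟩ := hM
  rw [SetLike.mem_coe, Polynomial.degreeLT_eq_span_X_pow] at hP
  induction hP using Submodule.span_induction with
  | mem x hx =>
    simp only [Finset.coe_image, Finset.coe_range, Set.mem_image, Set.mem_Iio] at hx
    obtain ⟨j, hj, rfl⟩ := hx
    have h1 := Pn_mono G r hj.le (hA j)
    have h2 := (Pn G r n).smul_mem (θ j) (Mp_X_pow_mem G r hj)
    simpa using (Pn G r n).add_mem h1 h2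
  | zero => simp
  | add x y _ _ hx hy => rw [map_add, mul_add]; exact (Pn G r n).add_mem hx hy
  | smul a x _ hx => rw [map_smul, mul_smul_comm]; exact (Pn G r n).smul_mem a hx

lemma adjoin_mul_Pn (hA : ∀ n, A * Mp G r (X ^ n) - θ n • Mp G r (X ^ n) ∈ Pn G r n)
    (n : ℕ) (N : Matrix V V ℝ) (hN : N ∈ Algebra.adjoin ℝ {A}) :
    ∀ M ∈ Pn G r n, N * M ∈ Pn G r n := by
  induction hN using Algebra.adjoin_induction with
  | mem x hx =>
    rw [Set.mem_singleton_iff] at hx; subst hx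
    exact fun M hM => A_mul_Pn G r x θ hA n M hM
  | algebraMap a =>
    intro M hM
    rw [Algebra.algebraMap_eq_smul_one, smul_mul_assoc, one_mul]
    exact (Pn G r n).smul_mem a hM
  | add x y _ _ hx hy => intro M hM; rw [add_mul]; exact (Pn G r n).add_mem (hx M hM) (hy M hM)
  | mul x y _ _ hx hy => intro M hM; rw [mul_assoc]; exact hx _ (hy M hM)

lemma exists_E (hAs : Aᵀ = A)
    (hA : ∀ n, A * Mp G r (X ^ n) - θ n • Mp G r (X ^ n) ∈ Pn G r n) (n : ℕ) :
    ∃ E : Matrix V V ℝ, E ∈ Pn G r (n+1) ∧ Mp G r (X ^ n) - E ∈ Pn G r n ∧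
      (∀ M ∈ Pn G r n, (E * M).trace = 0) ∧ A * E = θ n • E ∧ E * A = θ n • E := by
  obtain ⟨g, hg, hgo⟩ := exists_proj (Pn G r n) (Mp G r (X ^ n))
  set E := Mp G r (X ^ n) - g with hE
  have hEm : E ∈ Pn G r (n+1) :=
    (Pn G r (n+1)).sub_mem (Mp_X_pow_mem G r (Nat.lt_succ_self n)) (Pn_mono G r (Nat.le_succ n) hg)
  have ho : ∀ M ∈ Pn G r n, (E * M).trace = 0 := by
    intro M hM
    rw [← sum_eq_trace (Pn_symm hM)]
    exact hgo M hM
  have hN : A * E - θ n • E ∈ Pn G r n := by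
    have h1 : A * E - θ n • E = (A * Mp G r (X ^ n) - θ n • Mp G r (X ^ n)) - (A * g - θ n • g) := by
      rw [hE, mul_sub, smul_sub]; abel
    rw [h1]
    exact (Pn G r n).sub_mem (hA n)
      ((Pn G r n).sub_mem (A_mul_Pn G r A θ hA n g hg) ((Pn G r n).smul_mem _ hg))
  have hEs := Pn_symm hEm
  have hcomm : A * E = E * A := by
    have h1 := Pn_symm (A_mul_Pn G r A θ hA (n+1) E hEm)
    rw [Matrix.transpose_mul, hEs, hAs] at h1
    exact h1.symm
  have hz : A * E - θ n • E = 0 := by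
    apply trace_sq_zero (Pn_symm hN)
    set N := A * E - θ n • E with hNd
    have h2 : N * N = E * (A * N - θ n • N) := by
      have hN' : N = E * A - θ n • E := by rw [hNd, hcomm]
      nth_rewrite 1 [hN']
      simp only [sub_mul, mul_sub, smul_mul_assoc, mul_smul_comm, mul_assoc]
    rw [h2]
    exact ho _ ((Pn G r n).sub_mem (A_mul_Pn G r A θ hA n N hN) ((Pn G r n).smul_mem _ hN))
  have hAE : A * E = θ n • E := sub_eq_zero.mp hz
  refine ⟨E, hEm, ?_, ho, hAE, hcomm ▸ hAE⟩
  simpa [hE] using hg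

/-- the key vanishing -/
lemma key_vanish (hA : ∀ n, A * Mp G r (X ^ n) - θ n • Mp G r (X ^ n) ∈ Pn G r n)
    (hall : ∀ P, Mp G r P ∈ Algebra.adjoin ℝ {A})
    (n m : ℕ) (hnm : m + 2 ≤ n) (E E' : Matrix V V ℝ)
    (hE : E ∈ Pn G r (n+1)) (hEo : ∀ M ∈ Pn G r n, (E * M).trace = 0)
    (hE' : E' ∈ Pn G r (m+1)) (x : V) :
    E * Matrix.diagonal (fun v => r ^ G.dist x v) * E' = 0 := by
  set Dg : V → Matrix V V ℝ := fun x => Matrix.diagonal (fun v => r ^ G.dist x v) with hDg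
  have hEs := Pn_symm hE
  have hEs' := Pn_symm hE'
  have mem_adj : ∀ {j : ℕ} {M : Matrix V V ℝ}, M ∈ Pn G r j → M ∈ Algebra.adjoin ℝ {A} := by
    rintro j M ⟨P, -, rfl⟩; exact hall P
  have hsum : ∑ x, ((E * Dg x * E')ᵀ * (E * Dg x * E')).trace = 0 := by
    obtain ⟨P1, hP1, hP1e⟩ := adjoin_mul_Pn G r A θ hA (m+1) E' (mem_adj hE') E' hE'
    have hT : Mp G r X ∈ Pn G r 2 := by simpa using Mp_X_pow_mem G r (n := 1) (m := 2) (by norm_num)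
    obtain ⟨P2, hP2, hP2e⟩ := adjoin_mul_Pn G r A θ hA 2 _ (hall X) _ hT
    have hH : Mp G r (P1 * P2) ∈ Pn G r n := by
      refine ⟨P1 * P2, ?_, rfl⟩
      rw [SetLike.mem_coe, Polynomial.mem_degreeLT] at hP1 hP2 ⊢
      by_cases h1 : P1 = 0
      · simp only [h1, zero_mul, degree_zero]; exact WithBot.bot_lt_coe _
      by_cases h2 : P2 = 0
      · simp only [h2, mul_zero, degree_zero]; exact WithBot.bot_lt_coe _
      rw [degree_mul, degree_eq_natDegree h1, degree_eq_natDegree h2] at *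
      norm_cast at *
      omega
    have hfin := hEo _ (adjoin_mul_Pn G r A θ hA n E (mem_adj hE) _ hH)
    rw [← hfin]
    have hterm : ∀ x, ((E * Dg x * E')ᵀ * (E * Dg x * E')).trace
        = ∑ y, ∑ z, (E * E) y z * (r ^ G.dist x z * (E' * E') z y * r ^ G.dist x y) := by
      intro x
      rw [Matrix.transpose_mul, Matrix.transpose_mul, hEs, hEs', hDg]
      simp only [Matrix.diagonal_transpose]
      have : (E' * (diagonal (fun v => r ^ G.dist x v) * E) *
          (E * diagonal (fun v => r ^ G.dist x v) * E')).trace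
          = ((E * E) * (diagonal (fun v => r ^ G.dist x v) * (E' * E') *
            diagonal (fun v => r ^ G.dist x v))).trace := by
        rw [mul_assoc, Matrix.trace_mul_comm]
        simp only [mul_assoc]
        rw [Matrix.trace_mul_comm]
        simp only [mul_assoc]
      rw [this]
      simp only [Matrix.trace, Matrix.diag_apply]
      apply Finset.sum_congr rfl; intro y _
      rw [Matrix.mul_apply]
      apply Finset.sum_congr rfl; intro z _
      rw [Matrix.mul_diagonal, Matrix.diagonal_mul]
    simp only [hterm]
    rw [Finset.sum_comm]
    rw [← mul_assoc]
    simp only [Matrix.trace, Matrix.diag_apply]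
    apply Finset.sum_congr rfl; intro y _
    rw [Finset.sum_comm, Matrix.mul_apply]
    apply Finset.sum_congr rfl; intro z _
    rw [← Finset.mul_sum]
    congr 1
    rw [Mp_apply, Polynomial.eval_mul, ← Mp_apply, ← Mp_apply, hP1e, hP2e]
    rw [Matrix.mul_apply (M := Mp G r X), Finset.mul_sum]
    apply Finset.sum_congr rfl; intro w _
    simp only [Mp_apply, eval_X]
    rw [SimpleGraph.dist_comm (u := z) (v := w)]
    ring
  have hnn : ∀ x ∈ Finset.univ, 0 ≤ ((E * Dg x * E')ᵀ * (E * Dg x * E')).trace := by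
    intro x _
    simp only [Matrix.trace, Matrix.diag_apply, Matrix.mul_apply, Matrix.transpose_apply]
    exact Finset.sum_nonneg fun i _ => Finset.sum_nonneg fun j _ => mul_self_nonneg _
  have h0 := (Finset.sum_eq_zero_iff_of_nonneg hnn).mp hsum x (Finset.mem_univ x)
  have h1 : ((E * Dg x * E')ᴴ * (E * Dg x * E')).trace = 0 := by
    rw [conjTranspose_eq_transpose_of_trivial, h0]
  exact Matrix.trace_conjTranspose_mul_self_eq_zero_iff.mp h1

lemma key_vanish' (hA : ∀ n, A * Mp G r (X ^ n) - θ n • Mp G r (X ^ n) ∈ Pn G r n)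
    (hall : ∀ P, Mp G r P ∈ Algebra.adjoin ℝ {A})
    (n m : ℕ) (hnm : m + 2 ≤ n) (E E' : Matrix V V ℝ)
    (hE : E ∈ Pn G r (n+1)) (hEo : ∀ M ∈ Pn G r n, (E * M).trace = 0)
    (hE' : E' ∈ Pn G r (m+1)) (x : V) :
    E' * Matrix.diagonal (fun v => r ^ G.dist x v) * E = 0 := by
  have h := congrArg Matrix.transpose (key_vanish G r A θ hA hall n m hnm E E' hE hEo hE' x)
  rw [Matrix.transpose_mul, Matrix.transpose_mul, Pn_symm hE, Pn_symm hE',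
    Matrix.diagonal_transpose] at h
  simpa [mul_assoc] using h

lemma decomp (E : ℕ → Matrix V V ℝ) (hE : ∀ n, Mp G r (X ^ n) - E n ∈ Pn G r n) (n : ℕ) :
    ∀ M ∈ Pn G r n, ∃ w : ℕ → ℝ, M = ∑ m ∈ Finset.range n, w m • E m := by
  induction n with
  | zero =>
    rintro M ⟨P, hP, rfl⟩
    have : P = 0 := by
      rw [SetLike.mem_coe, Polynomial.mem_degreeLT] at hP
      simpa using hP
    exact ⟨0, by simp [this]⟩
  | succ n ih =>
    rintro M ⟨P, hP, rfl⟩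
    rw [SetLike.mem_coe, Polynomial.mem_degreeLT] at hP
    set a := P.coeff n
    have h1 : P - C a * X ^ n ∈ Polynomial.degreeLT ℝ n := by
      rw [Polynomial.mem_degreeLT, Polynomial.degree_lt_iff_coeff_zero]
      intro m hm
      rw [coeff_sub, coeff_C_mul, coeff_X_pow]
      by_cases h : m = n
      · subst h; simp [a]
      · have : P.coeff m = 0 := by
          apply Polynomial.coeff_eq_zero_of_degree_lt
          refine lt_of_lt_of_le hP ?_
          exact_mod_cast (by omega : n + 1 ≤ m)
        simp [h, this]
    have h2 : Mp G r (P - C a * X ^ n) ∈ Pn G r n := ⟨_, h1, rfl⟩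
    have h3 : Mp G r P - a • E n ∈ Pn G r n := by
      have : Mp G r P - a • E n = Mp G r (P - C a * X ^ n) + a • (Mp G r (X ^ n) - E n) := by
        rw [map_sub, ← Polynomial.smul_eq_C_mul, map_smul, smul_sub]; abel
      rw [this]
      exact (Pn G r n).add_mem h2 ((Pn G r n).smul_mem _ (hE n))
    obtain ⟨w, hw⟩ := ih _ h3
    refine ⟨fun m => if m = n then a else w m, ?_⟩
    rw [Finset.sum_range_succ]
    simp only [if_true]
    rw [sub_eq_iff_eq_add] at hw
    rw [hw]
    congr 1
    apply Finset.sum_congr rfl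
    intro m hm
    rw [if_neg (by have := Finset.mem_range.mp hm; omega)]

/-- Tridiagonal relation -/
theorem TD (hAs : Aᵀ = A)
    (hA : ∀ n, A * Mp G r (X ^ n) - θ n • Mp G r (X ^ n) ∈ Pn G r n)
    (hall : ∀ P, Mp G r P ∈ Algebra.adjoin ℝ {A})
    (N : ℕ) (hone : (1 : Matrix V V ℝ) ∈ Pn G r N)
    (β γ ϱ : ℝ)
    (hθ : ∀ n, θ n ^ 2 - β * θ n * θ (n+1) + θ (n+1) ^ 2 - γ * (θ n + θ (n+1)) - ϱ = 0) (x : V) :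
    let Dg : Matrix V V ℝ := Matrix.diagonal (fun v => r ^ G.dist x v)
    A * A * A * Dg - Dg * (A * A * A) - (β + 1) • (A * A * Dg * A - A * Dg * (A * A))
      - γ • (A * A * Dg - Dg * (A * A)) - ϱ • (A * Dg - Dg * A) = 0 := by
  intro Dg
  choose E hE1 hE2 hE3 hE4 hE5 using exists_E G r A θ hAs hA
  obtain ⟨w, hw⟩ := decomp G r E hE2 N 1 hone
  set Z := A * A * A * Dg - Dg * (A * A * A) - (β + 1) • (A * A * Dg * A - A * Dg * (A * A))
      - γ • (A * A * Dg - Dg * (A * A)) - ϱ • (A * Dg - Dg * A) with hZ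
  have hEZ : ∀ n m, E n * Z * E m = 0 := by
    intro n m
    have key : E n * Z * E m = ((θ n - θ m) *
        (θ n ^ 2 - β * θ n * θ m + θ m ^ 2 - γ * (θ n + θ m) - ϱ)) • (E n * Dg * E m) := by
      have l1 : ∀ Y : Matrix V V ℝ, E n * (A * Y) = θ n • (E n * Y) := by
        intro Y; rw [← mul_assoc, hE5, smul_mul_assoc]
      have hh : ∀ (c : ℝ) (X Y : Matrix V V ℝ), X * (c • Y) = c • (X * Y) := by
        intros; rw [mul_smul_comm]
      rw [hZ]
      simp only [sub_mul, mul_sub, smul_mul_assoc, mul_smul_comm, mul_assoc, hE4, l1, smul_smul,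
        smul_sub]
      module
    rw [key]
    rcases lt_trichotomy n m with h | h | h
    · rcases Nat.lt_or_ge (n+1) m with h' | h'
      · rw [key_vanish' G r A θ hA hall m n h' (E m) (E n) (hE1 m) (hE3 m) (hE1 n) x, smul_zero]
      · have : m = n + 1 := by omega
        subst this
        rw [hθ n]; simp
    · subst h; simp
    · rcases Nat.lt_or_ge (m+1) n with h' | h'
      · rw [key_vanish G r A θ hA hall n m h' (E n) (E m) (hE1 n) (hE3 n) (hE1 m) x, smul_zero]
      · have : n = m + 1 := by omega
        subst this
        have h2 := hθ m
        have : θ (m+1) ^ 2 - β * θ (m+1) * θ m + θ m ^ 2 - γ * (θ (m+1) + θ m) - ϱ = 0 := by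
          linarith
        rw [this]; simp
  have : Z = 1 * Z * 1 := by simp
  rw [this, hw, Finset.sum_mul, Finset.sum_mul]
  apply Finset.sum_eq_zero; intro n _
  rw [Finset.mul_sum]
  apply Finset.sum_eq_zero; intro m _
  rw [smul_mul_assoc, smul_mul_assoc, mul_smul_comm, hEZ, smul_zero, smul_zero]

end Alg
end TB
end

section
open Polynomial Matrix
namespace TB

section Comb
set_option linter.unusedSectionVars false
variable {V : Type*} [Fintype V]

open Classical in
noncomputable def Cf (G : SimpleGraph V) (x y : V) : Finset V :=
  Finset.univ.filter fun s => G.Adj x s ∧ G.dist s y + 1 = G.dist x y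

open Classical in
noncomputable def Af (G : SimpleGraph V) (x y : V) : Finset V :=
  Finset.univ.filter fun s => G.Adj x s ∧ G.dist s y = G.dist x y

open Classical in
noncomputable def Bf (G : SimpleGraph V) (x y : V) : Finset V :=
  Finset.univ.filter fun s => G.Adj x s ∧ G.dist s y = G.dist x y + 1

open Classical in
noncomputable def Nf (G : SimpleGraph V) (x y : V) : Finset V :=
  Finset.univ.filter fun s => G.Adj x s ∧ G.dist s y ≤ G.dist x y

variable {G : SimpleGraph V}

lemma mem_Cf {x y s : V} : s ∈ Cf G x y ↔ G.Adj x s ∧ G.dist s y + 1 = G.dist x y := by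
  simp [Cf]
lemma mem_Af {x y s : V} : s ∈ Af G x y ↔ G.Adj x s ∧ G.dist s y = G.dist x y := by
  simp [Af]
lemma mem_Bf {x y s : V} : s ∈ Bf G x y ↔ G.Adj x s ∧ G.dist s y = G.dist x y + 1 := by
  simp [Bf]
lemma mem_Nf {x y s : V} : s ∈ Nf G x y ↔ G.Adj x s ∧ G.dist s y ≤ G.dist x y := by
  simp [Nf]

lemma dist_le_succ (hc : G.Connected) {x s : V} (h : G.Adj x s) (y : V) :
    G.dist s y ≤ G.dist x y + 1 := by
  have := hc.dist_triangle (u := s) (v := x) (w := y)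
  rw [SimpleGraph.dist_eq_one_iff_adj.mpr h.symm] at this
  omega

lemma dist_ge_pred (hc : G.Connected) {x s : V} (h : G.Adj x s) (y : V) :
    G.dist x y ≤ G.dist s y + 1 := dist_le_succ hc h.symm y

lemma exists_closer (hc : G.Connected) {x y : V} {n : ℕ} (h : G.dist x y = n + 1) :
    ∃ s, G.Adj x s ∧ G.dist s y = n := by
  obtain ⟨w, hw⟩ := hc.exists_walk_length_eq_dist x y
  cases w with
  | nil => simp at h
  | cons hadj q =>
    refine ⟨_, hadj, ?_⟩
    have h1 := SimpleGraph.dist_le q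
    have h2 := dist_ge_pred hc hadj y
    simp only [SimpleGraph.Walk.length_cons] at hw
    omega

lemma exists_dist (hc : G.Connected) (n : ℕ) : ∀ m ≤ n, ∀ x y : V, G.dist x y = n →
    ∃ s, G.dist s y = m := by
  induction n with
  | zero => intro m hm x y h; exact ⟨x, by omega⟩
  | succ n ih =>
    intro m hm x y h
    rcases Nat.lt_or_ge n m with h1 | h1
    · exact ⟨x, by omega⟩
    · obtain ⟨s, -, hs⟩ := exists_closer hc h
      exact ih m h1 s y hs

open Classical in
lemma nbr_sum (hc : G.Connected) (z y : V) (F : ℕ → ℝ) (T : V → ℝ) :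
    (∑ v, if G.Adj z v then F (G.dist v y) * T v else 0) =
      F (G.dist z y - 1) * ∑ v ∈ Cf G z y, T v + F (G.dist z y) * ∑ v ∈ Af G z y, T v
        + F (G.dist z y + 1) * ∑ v ∈ Bf G z y, T v := by
  simp only [Cf, Af, Bf, Finset.sum_filter, Finset.mul_sum]
  rw [← Finset.sum_add_distrib, ← Finset.sum_add_distrib]
  apply Finset.sum_congr rfl
  intro v _
  by_cases h : G.Adj z v
  · have h1 := dist_le_succ hc h y
    have h2 := dist_ge_pred hc h y
    have h3 : G.dist v y + 1 = G.dist z y ∨ G.dist v y = G.dist z y ∨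
      G.dist v y = G.dist z y + 1 := by omega
    rcases h3 with h3 | h3 | h3
    · rw [← h3]; simp [h]; intro h4; omega
    · rw [← h3]; simp [h]
    · rw [h3]
      simp [h]; intro h4; omega
  · simp [h]

structure DR (G : SimpleGraph V) (D : ℕ) (c a bb : ℕ → ℕ) : Prop where
  conn : G.Connected
  hle : ∀ x y : V, G.dist x y ≤ D
  hex : ∃ x y : V, G.dist x y = D
  hC : ∀ x y : V, (Cf G x y).card = c (G.dist x y)
  hA : ∀ x y : V, (Af G x y).card = a (G.dist x y)
  hB : ∀ x y : V, (Bf G x y).card = bb (G.dist x y)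

lemma DR.exd {D : ℕ} {c a bb : ℕ → ℕ} (H : DR G D c a bb) {m : ℕ} (hm : m ≤ D) :
    ∃ x y : V, G.dist x y = m := by
  obtain ⟨x, y, h⟩ := H.hex
  obtain ⟨s, hs⟩ := exists_dist H.conn D m hm x y h
  exact ⟨s, y, hs⟩

lemma DR.c_zero {D : ℕ} {c a bb : ℕ → ℕ} (H : DR G D c a bb) : c 0 = 0 := by
  obtain ⟨x, y, h⟩ := H.exd (Nat.zero_le D)
  have h0 := H.hC x y
  rw [h] at h0
  rw [← h0, Finset.card_eq_zero, Finset.eq_empty_iff_forall_notMem]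
  intro s hs
  rw [mem_Cf] at hs; omega

lemma DR.c_pos {D : ℕ} {c a bb : ℕ → ℕ} (H : DR G D c a bb) {m : ℕ} (hm : m + 1 ≤ D) :
    0 < c (m + 1) := by
  obtain ⟨x, y, h⟩ := H.exd hm
  rw [← h, ← H.hC, Finset.card_pos]
  obtain ⟨s, hs, hs2⟩ := exists_closer H.conn h
  exact ⟨s, mem_Cf.mpr ⟨hs, by omega⟩⟩

lemma DR.c_one {D : ℕ} {c a bb : ℕ → ℕ} (H : DR G D c a bb) (hm : 1 ≤ D) :
    c 1 = 1 := by
  obtain ⟨x, y, h⟩ := H.exd hm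
  have h0 := H.hC x y
  rw [h] at h0
  rw [← h0, Finset.card_eq_one]
  refine ⟨y, ?_⟩
  ext s
  rw [mem_Cf, Finset.mem_singleton]
  constructor
  · rintro ⟨h1, h2⟩
    exact H.conn.dist_eq_zero_iff.mp (by omega)
  · rintro rfl
    simp [h, SimpleGraph.dist_eq_one_iff_adj.mp h]

lemma DR.sum {D : ℕ} {c a bb : ℕ → ℕ} (H : DR G D c a bb) {m : ℕ} (hm : m ≤ D) :
    c m + a m + bb m = bb 0 := by
  classical
  have key : ∀ x y : V, (c (G.dist x y) + a (G.dist x y) + bb (G.dist x y) : ℝ) =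
      (Finset.univ.filter fun s => G.Adj x s).card := by
    intro x y
    have h1 := nbr_sum H.conn x y (fun _ => 1) (fun _ => 1)
    simp only [one_mul, Finset.sum_const, nsmul_eq_mul, mul_one, H.hC, H.hA, H.hB] at h1
    rw [← h1, Finset.card_filter]; push_cast; simp
  obtain ⟨x, y, h⟩ := H.exd hm
  have h1 := key x y
  have h2 := key x x
  have h3 : a 0 = 0 := by
    have h0 := H.hA x x
    rw [SimpleGraph.dist_self] at h0
    rw [← h0, Finset.card_eq_zero,
      Finset.eq_empty_iff_forall_notMem]
    intro s hs
    rw [mem_Af, SimpleGraph.dist_self] at hs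
    have := H.conn.dist_eq_zero_iff.mp hs.2
    exact hs.1.ne this.symm
  rw [← h1, SimpleGraph.dist_self, H.c_zero, h3, h] at h2
  push_cast at h2
  have : ((c m + a m + bb m : ℕ) : ℝ) = (bb 0 : ℕ) := by push_cast; linarith
  exact_mod_cast this

end Comb
end TB
end

section
open Polynomial Matrix
namespace TB

lemma num_core (b α β g k : ℝ) (c1 c2 c3 b1 b2 b3 a1 a2 a3 : ℝ)
    (hk : k = g * β) 
    (hc2 : c2 = (1 + b) * (1 + α)) (hc3 : c3 = (1 + b + b^2) * (1 + α * (1 + b)))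
    (hc1 : c1 = 1)
    (hb1 : b1 = (g - 1) * (β - α)) (hb2 : b2 = (g - (1 + b)) * (β - α * (1 + b)))
    (hb3 : b3 = (g - (1 + b + b^2)) * (β - α * (1 + b + b^2)))
    (h1 : c1 + a1 + b1 = k) (h2 : c2 + a2 + b2 = k) (h3 : c3 + a3 + b3 = k) (ha1 : a1 = 0) :
    a2 = (1 + b) * (1 + b - c2) ∧ a3 = (1 + b + b^2) * a2 ∧ c3 = (1 + b + b^2) * (c2 - b) := by
  have hβ : β = 1 - α * (g - 1) := by subst_vars; linarith
  have e2 : a2 = k - c2 - b2 := by linarith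
  have e3 : a3 = k - c3 - b3 := by linarith
  subst hk hb1 hb2 hb3 
  refine ⟨?_, ?_, ?_⟩
  · rw [e2, hc2, hβ]; ring
  · rw [e3, e2, hc2, hc3, hβ]; ring
  · rw [hc3, hc2]; ring

lemma int_of_rat {q : ℚ} {m n : ℤ} (h : q ^ 2 + m * q + n = 0) : ∃ z : ℤ, q = z := by
  have hi : IsIntegral ℤ q := by
    refine ⟨X ^ 2 + C m * X + C n, ?_, ?_⟩
    · have : (X ^ 2 + C m * X + C n : ℤ[X]) = X ^ 2 + (C m * X + C n) := by ring
      rw [this]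
      apply monic_X_pow_add
      exact lt_of_le_of_lt degree_linear_le (by norm_num)
    · rw [eval₂_add, eval₂_add, eval₂_mul, eval₂_X_pow, eval₂_X, eval₂_C, eval₂_C]
      exact h
  obtain ⟨z, hz⟩ := IsIntegrallyClosed.isIntegral_iff.mp hi
  exact ⟨z, by rw [← hz]; rfl⟩

lemma num_int (b : ℝ) (c2 c3 a2 a3 : ℕ) (hb0 : b ≠ 0) (hb1 : b ≠ -1) (hc3 : 0 < c3)
    (ha2 : 0 < a2)
    (h2 : (a2 : ℝ) = (1 + b) * (1 + b - c2)) (h3 : (a3 : ℝ) = (1 + b + b^2) * a2)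
    (h4 : (c3 : ℝ) = (1 + b + b^2) * (c2 - b)) : b ≤ -2 := by
  have hr : ∃ q : ℚ, b = q := by
    by_cases hc : (c2 : ℝ) = 1
    · have ha3 : (a3 : ℝ) ≠ 0 := by
        intro h0
        rw [h0] at h3
        have : (a2 : ℝ) ≠ 0 := by positivity
        have h5 : (1 + b + b ^ 2) = 0 := by
          rcases mul_eq_zero.mp h3.symm with h | h
          · exact h
          · exact absurd h this
        rw [h5] at h4
        have : (c3 : ℝ) ≠ 0 := by positivity
        exact this (by linarith)
      refine ⟨1 - c3 * a2 / a3, ?_⟩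
      push_cast
      rw [eq_sub_iff_add_eq, ← eq_sub_iff_add_eq', div_eq_iff ha3, h4, h3, hc]
      ring
    · have hc' : ((c2 : ℝ) - 1) ≠ 0 := sub_ne_zero.mpr hc
      have ha : (a2 : ℝ) ≠ 0 := by positivity
      refine ⟨((a3 : ℚ) / a2 - a2 - c2) / (c2 - 1), ?_⟩
      push_cast
      rw [eq_div_iff hc', h3, mul_div_assoc, div_self ha]
      linarith
  obtain ⟨q, rfl⟩ := hr
  have hq : q ^ 2 + ((2 - c2 : ℤ) : ℚ) * q + ((1 - c2 - a2 : ℤ) : ℚ) = 0 := by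
    have : ((q ^ 2 + ((2 - c2 : ℤ) : ℚ) * q + ((1 - c2 - a2 : ℤ) : ℚ) : ℚ) : ℝ) = 0 := by
      push_cast
      linarith
    exact_mod_cast this
  obtain ⟨z, rfl⟩ := int_of_rat hq
  have g2 : (a2 : ℤ) = (1 + z) * (1 + z - c2) := by
    have : ((a2 : ℤ) : ℝ) = (((1 + z) * (1 + z - c2) : ℤ) : ℝ) := by
      push_cast; push_cast at h2; exact h2
    exact_mod_cast this
  have g4 : (c3 : ℤ) = (1 + z + z^2) * (c2 - z) := by
    have : ((c3 : ℤ) : ℝ) = (((1 + z + z^2) * (c2 - z) : ℤ) : ℝ) := by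
      push_cast; push_cast at h4; exact h4
    exact_mod_cast this
  have n0 : z ≠ 0 := by rintro rfl; simp at hb0
  have n1 : z ≠ -1 := by rintro rfl; simp at hb1
  have : z ≤ -2 := by
    by_contra hcon
    have hz : 1 ≤ z := by omega
    have p1 : 0 < (c2 : ℤ) - z := by
      by_contra h
      have : (1 + z + z^2) * (c2 - z) ≤ 0 :=
        mul_nonpos_of_nonneg_of_nonpos (by positivity) (by omega)
      omega
    have : (1 + z) * (1 + z - c2) ≤ 0 :=
      mul_nonpos_of_nonneg_of_nonpos (by positivity) (by omega)
    omega
  have : (z : ℝ) ≤ -2 := by exact_mod_cast this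
  push_cast
  exact this

section
variable {V : Type*} [Fintype V] {G : SimpleGraph V}

lemma numerics {D : ℕ} {c a bb : ℕ → ℕ} (H : DR G D c a bb) (hD : 3 ≤ D) {b α β : ℝ}
    (hb0 : b ≠ 0) (hb1 : b ≠ -1)
    (hc : ∀ i ≤ D, (c i : ℝ) = (∑ k ∈ Finset.range i, b ^ k) *
      (1 + α * (∑ k ∈ Finset.range (i - 1), b ^ k)))
    (hbb : ∀ i ≤ D, (bb i : ℝ) = ((∑ k ∈ Finset.range D, b ^ k) - (∑ k ∈ Finset.range i, b ^ k)) *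
      (β - α * (∑ k ∈ Finset.range i, b ^ k)))
    (ha1 : a 1 = 0) (ha2 : a 2 ≠ 0) :
    b ≤ -2 ∧ (a 2 : ℝ) = (1 + b) * (1 + b - c 2) ∧ (a 3 : ℝ) = (1 + b + b^2) * a 2 ∧
      (c 3 : ℝ) = (1 + b + b^2) * (c 2 - b) := by
  have key := num_core b α β (∑ k ∈ Finset.range D, b ^ k) (bb 0) (c 1) (c 2) (c 3) (bb 1) (bb 2)
    (bb 3) (a 1) (a 2) (a 3)
    (by rw [hbb 0 (by omega)]; simp)
    (by rw [hc 2 (by omega)]; simp [Finset.sum_range_succ])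
    (by rw [hc 3 (by omega)]; simp [Finset.sum_range_succ])
    (by rw [hc 1 (by omega)]; simp)
    (by rw [hbb 1 (by omega)]; simp [Finset.sum_range_succ])
    (by rw [hbb 2 (by omega)]; simp [Finset.sum_range_succ])
    (by rw [hbb 3 (by omega)]; simp [Finset.sum_range_succ])
    (by exact_mod_cast H.sum (m := 1) (by omega))
    (by exact_mod_cast H.sum (m := 2) (by omega))
    (by exact_mod_cast H.sum (m := 3) (by omega))
    (by exact_mod_cast ha1)
  refine ⟨num_int b (c 2) (c 3) (a 2) (a 3) hb0 hb1 (H.c_pos hD) (Nat.pos_of_ne_zero ha2)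
    key.1 key.2.1 key.2.2, key⟩
end
end TB
end

section
open Polynomial Matrix
namespace TB

section Bal
set_option linter.unusedSectionVars false
variable {V : Type*} [Fintype V] {G : SimpleGraph V}

noncomputable def Mf (G : SimpleGraph V) (f : ℕ → ℝ) : Matrix V V ℝ := Matrix.of fun y z => f (G.dist y z)

lemma Mf_apply (f : ℕ → ℝ) (y z : V) : Mf G f y z = f (G.dist y z) := rfl

noncomputable def dl (j h : ℕ) : ℝ := if h = j then 1 else 0

noncomputable def Lop (c a bb : ℕ → ℕ) (f : ℕ → ℝ) (h : ℕ) : ℝ :=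
  c h * f (h - 1) + a h * f h + bb h * f (h + 1)

variable {D : ℕ} {c a bb : ℕ → ℕ} 

lemma dl_adj (y v : V) : dl 1 (G.dist y v) = if G.dist y v = 1 then 1 else 0 := rfl

lemma A_mul_Mf (H : DR G D c a bb) (f : ℕ → ℝ) :
    Mf G (dl 1) * Mf G f = Mf G (Lop c a bb f) := by
  classical
  ext y z
  rw [Matrix.mul_apply]
  have h := nbr_sum H.conn y z f (fun _ => 1)
  simp only [Finset.sum_const, nsmul_eq_mul, mul_one, H.hC, H.hA, H.hB] at h
  rw [Mf_apply, Lop]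
  rw [show (c (G.dist y z) : ℝ) * f (G.dist y z - 1) + a (G.dist y z) * f (G.dist y z) +
    bb (G.dist y z) * f (G.dist y z + 1) = f (G.dist y z - 1) * (c (G.dist y z) : ℝ) +
      f (G.dist y z) * a (G.dist y z) + f (G.dist y z + 1) * bb (G.dist y z) by ring, ← h]
  apply Finset.sum_congr rfl
  intro v _
  rw [Mf_apply, Mf_apply, dl_adj]
  simp only [SimpleGraph.dist_eq_one_iff_adj]
  split_ifs <;> simp

lemma Mf_symm (f : ℕ → ℝ) : (Mf G f)ᵀ = Mf G f := by
  ext y z; simp [Mf_apply, SimpleGraph.dist_comm]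

lemma Mf_mul_A (H : DR G D c a bb) (f : ℕ → ℝ) :
    Mf G f * Mf G (dl 1) = Mf G (Lop c a bb f) := by
  have h := congrArg Matrix.transpose (A_mul_Mf H f)
  rwa [Matrix.transpose_mul, Mf_symm, Mf_symm, Mf_symm] at h

lemma Mf_mem (H : DR G D c a bb) [DecidableEq V] : ∀ i ≤ D,
    Mf G (dl i) ∈ Algebra.adjoin ℝ {Mf G (dl 1)} := by
  have h0 : Mf G (dl 0) = 1 := by
    ext y z
    rw [Mf_apply, dl, Matrix.one_apply]
    simp only [H.conn.dist_eq_zero_iff]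
  have hA := Algebra.self_mem_adjoin_singleton ℝ (Mf G (dl 1))
  intro i
  induction i using Nat.strong_induction_on with
  | _ i ih =>
    intro hi
    match i, ih, hi with
    | 0, _, _ => rw [h0]; exact one_mem _
    | 1, _, _ => exact hA
    | i + 2, ih, hi =>
      have hc := H.c_pos (m := i + 1) hi
      have hc' : (c (i + 2) : ℝ) ≠ 0 := by positivity
      have e : Mf G (dl (i+2)) = (c (i+2) : ℝ)⁻¹ • (Mf G (dl 1) * Mf G (dl (i+1))
          - (a (i+1) : ℝ) • Mf G (dl (i+1)) - (bb i : ℝ) • Mf G (dl i)) := by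
        rw [A_mul_Mf H]
        ext y z
        simp only [Matrix.smul_apply, Matrix.sub_apply, Mf_apply, smul_eq_mul]
        rw [eq_inv_mul_iff_mul_eq₀ hc']
        generalize G.dist y z = h
        simp only [Lop, dl]
        rcases Nat.lt_trichotomy h (i+1) with h1 | h1 | h1
        · rcases Nat.lt_or_ge h i with h2 | h2
          · rw [if_neg (by omega), if_neg (by omega), if_neg (by omega), if_neg (by omega),
              if_neg (by omega)]; simp
          · have : h = i := by omega
            subst this
            rw [if_neg (by omega), if_neg (by omega), if_neg (by omega), if_pos rfl,
              if_pos rfl]; ring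
        · subst h1
          rw [if_neg (by omega), if_neg (by omega), if_pos rfl, if_neg (by omega),
            if_neg (by omega)]; ring
        · rcases Nat.lt_or_ge (i+2) h with h2 | h2
          · rw [if_neg (by omega), if_neg (by omega), if_neg (by omega), if_neg (by omega),
              if_neg (by omega)]; simp
          · have : h = i + 2 := by omega
            subst this
            rw [if_pos rfl, if_pos (by omega), if_neg (by omega), if_neg (by omega),
              if_neg (by omega)]; ring
      rw [e]
      refine Subalgebra.smul_mem _ (sub_mem (sub_mem (mul_mem hA (ih (i+1) (by omega) (by omega)))
        (Subalgebra.smul_mem _ (ih (i+1) (by omega) (by omega)) _))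
        (Subalgebra.smul_mem _ (ih i (by omega) (by omega)) _)) _

lemma hall_of (H : DR G D c a bb) [DecidableEq V] (r : ℝ) (P : ℝ[X]) :
    Mp G r P ∈ Algebra.adjoin ℝ {Mf G (dl 1)} := by
  have e : Mp G r P = ∑ i ∈ Finset.range (D+1), P.eval (r ^ i) • Mf G (dl i) := by
    ext y z
    rw [Mp_apply, Matrix.sum_apply]
    simp only [Matrix.smul_apply, Mf_apply, dl, smul_eq_mul]
    rw [Finset.sum_eq_single (G.dist y z)]
    · simp
    · intro j _ hj
      rw [if_neg hj.symm, mul_zero]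
    · intro h
      exact absurd (Finset.mem_range.mpr (Nat.lt_succ_of_le (H.hle y z))) h
  rw [e]
  exact sum_mem fun i hi => Subalgebra.smul_mem _
    (Mf_mem H i (Nat.lt_succ_iff.mp (Finset.mem_range.mp hi))) _

lemma hone_of (H : DR G D c a bb) [DecidableEq V] {r : ℝ} (hr : ∀ j, r ^ (j+1) ≠ 1) :
    (1 : Matrix V V ℝ) ∈ Pn G r (D+1) := by
  refine ⟨∏ j ∈ Finset.range D, (C (1 - r^(j+1))⁻¹ * (X - C (r^(j+1)))), ?_, ?_⟩
  · rw [SetLike.mem_coe, Polynomial.mem_degreeLT]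
    have : (∏ j ∈ Finset.range D, (C (1 - r^(j+1))⁻¹ * (X - C (r^(j+1))))).natDegree ≤ D := by
      refine (natDegree_prod_le _ _).trans ?_
      calc _ ≤ ∑ j ∈ Finset.range D, 1 := by
            apply Finset.sum_le_sum
            intro j _
            refine (natDegree_C_mul_le _ _).trans ?_
            rw [natDegree_X_sub_C]
        _ = D := by simp
    refine lt_of_le_of_lt degree_le_natDegree ?_
    exact_mod_cast Nat.lt_succ_of_le this
  · ext y z
    rw [Mp_apply, Matrix.one_apply, eval_prod]
    simp only [eval_mul, eval_C, eval_sub, eval_X]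
    split_ifs with h
    · subst h
      rw [SimpleGraph.dist_self, pow_zero]
      apply Finset.prod_eq_one
      intro j _
      exact inv_mul_cancel₀ (sub_ne_zero.mpr (hr j).symm)
    · have h1 : 0 < G.dist y z := H.conn.pos_dist_of_ne h
      apply Finset.prod_eq_zero (i := G.dist y z - 1)
      · rw [Finset.mem_range]; have := H.hle y z; omega
      · rw [Nat.sub_add_cancel h1]; simp

lemma Lop_pow (H : DR G D c a bb) {b r : ℝ} (hbr : b * r = 1) (n h : ℕ) (hh : h ≤ D) :
    Lop c a bb (fun i => (r ^ i) ^ n) h =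
      (r ^ h) ^ n * (bb 0 + c h * (b ^ n - 1) + bb h * (r ^ n - 1)) := by
  have hs : (bb 0 : ℝ) = c h + a h + bb h := by exact_mod_cast (H.sum hh).symm
  rw [Lop, hs]
  have e1 : (r ^ (h+1)) ^ n = (r ^ h) ^ n * r ^ n := by rw [pow_succ, mul_pow]
  have e2 : (c h : ℝ) * (r ^ (h-1)) ^ n = c h * ((r ^ h) ^ n * b ^ n) := by
    cases h with
    | zero => simp [H.c_zero]
    | succ m =>
      rw [Nat.add_sub_cancel, pow_succ, mul_pow, mul_assoc ((r ^ m) ^ n), ← mul_pow, mul_comm r b,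
        hbr, one_pow, mul_one]
  simp only [e1, e2]
  ring

lemma hA_of (H : DR G D c a bb) [DecidableEq V] {b r : ℝ} (hbr : b * r = 1) (C0 C1 C2 B0 B1 B2 : ℝ)
    (hc : ∀ h ≤ D, (c h : ℝ) = C0 + C1 * b ^ h + C2 * (b ^ h) ^ 2)
    (hbb : ∀ h ≤ D, (bb h : ℝ) = B0 + B1 * b ^ h + B2 * (b ^ h) ^ 2)
    (h1 : C2 * (b - 1) + B2 * (r - 1) = 0) (n : ℕ) :
    Mf G (dl 1) * Mp G r (X ^ n) -
      (bb 0 + C0 * (b ^ n - 1) + B0 * (r ^ n - 1)) • Mp G r (X ^ n) ∈ Pn G r n := by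
  have e0 : Mp G r (X ^ n) = Mf G (fun i => (r ^ i) ^ n) := by
    ext y z; simp [Mp_apply, Mf_apply]
  rw [e0, A_mul_Mf H]
  set e := C1 * (b ^ n - 1) + B1 * (r ^ n - 1)
  set g := C2 * (b ^ n - 1) + B2 * (r ^ n - 1)
  have ent : ∀ y z, (Mf G (Lop c a bb fun i => (r ^ i) ^ n) -
      ((bb 0 : ℝ) + C0 * (b ^ n - 1) + B0 * (r ^ n - 1)) • Mf G (fun i => (r ^ i) ^ n)) y z =
      (r ^ G.dist y z) ^ n * (e * b ^ G.dist y z + g * (b ^ G.dist y z) ^ 2) := by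
    intro y z
    rw [Matrix.sub_apply, Matrix.smul_apply, Mf_apply, Mf_apply, Lop_pow H hbr _ _ (H.hle y z),
      smul_eq_mul, hc _ (H.hle y z), hbb _ (H.hle y z)]
    simp only [e, g]
    ring
  have hX : ∀ h, r ^ h * b ^ h = 1 := by
    intro h; rw [← mul_pow, mul_comm, hbr, one_pow]
  have hg1 : n = 1 → g = 0 := by rintro rfl; simpa [g] using h1
  have he0 : n = 0 → e = 0 ∧ g = 0 := by rintro rfl; simp [e, g]
  clear_value e g
  rcases n with _ | _ | m
  · convert (Pn G r 0).zero_mem using 1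
    ext y z
    rw [ent, (he0 rfl).1, (he0 rfl).2]; simp
  · have : Mp G r (e • X ^ 0) ∈ Pn G r 1 := by
      rw [map_smul]
      exact Submodule.smul_mem _ _ (Mp_X_pow_mem G r (by omega))
    convert this using 1
    ext y z
    rw [ent, hg1 rfl, Mp_apply]
    have := hX (G.dist y z)
    simp only [eval_smul, smul_eq_mul, pow_zero, eval_one, zero_add, pow_one]
    linear_combination e * this
  · have : Mp G r (e • X ^ (m+1) + g • X ^ m) ∈ Pn G r (m+2) := by
      rw [map_add, map_smul, map_smul]
      exact add_mem (Submodule.smul_mem _ _ (Mp_X_pow_mem G r (by omega)))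
        (Submodule.smul_mem _ _ (Mp_X_pow_mem G r (by omega)))
    convert this using 1
    ext y z
    rw [ent, Mp_apply]
    simp only [eval_add, eval_smul, eval_pow, eval_X, smul_eq_mul]
    have := hX (G.dist y z)
    generalize r ^ G.dist y z = t at *
    generalize b ^ G.dist y z = x at *
    have e1 : t ^ (m+2) * x = t ^ (m+1) * (t * x) := by ring
    have e2 : t ^ (m+2) * x ^ 2 = t ^ m * (t * x)^2 := by ring
    calc _ = e * (t ^ (m+2) * x) + g * (t ^ (m+2) * x ^ 2) := by ring
      _ = _ := by rw [e1, e2, this]; ring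

lemma theta_rec {b r : ℝ} (hbr : b * r = 1) (k C0 B0 : ℝ) (n : ℕ) :
    (k + C0 * (b ^ n - 1) + B0 * (r ^ n - 1)) ^ 2
      - (b + r) * (k + C0 * (b ^ n - 1) + B0 * (r ^ n - 1)) *
        (k + C0 * (b ^ (n+1) - 1) + B0 * (r ^ (n+1) - 1))
      + (k + C0 * (b ^ (n+1) - 1) + B0 * (r ^ (n+1) - 1)) ^ 2
      - ((k - C0 - B0) * (2 - (b + r))) * ((k + C0 * (b ^ n - 1) + B0 * (r ^ n - 1)) +
        (k + C0 * (b ^ (n+1) - 1) + B0 * (r ^ (n+1) - 1)))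
      - (- C0 * B0 * (b - r) ^ 2 - (2 - (b + r)) * (k - C0 - B0) ^ 2) = 0 := by
  have h : b ^ n * r ^ n = 1 := by rw [← mul_pow, hbr, one_pow]
  rw [pow_succ b n, pow_succ r n]
  generalize b ^ n = p at *
  generalize r ^ n = q at *
  have hb : b ≠ 0 := left_ne_zero_of_mul_eq_one hbr
  have hp : p ≠ 0 := left_ne_zero_of_mul_eq_one h
  have hr : r = b⁻¹ := eq_inv_of_mul_eq_one_right hbr
  have hq : q = p⁻¹ := eq_inv_of_mul_eq_one_right h
  subst hr hq
  field_simp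
  ring

open Classical in
lemma TD_of (H : DR G D c a bb) {b α β : ℝ} (hb : b ≤ -2)
    (hc : ∀ i ≤ D, (c i : ℝ) = (∑ k ∈ Finset.range i, b ^ k) *
      (1 + α * (∑ k ∈ Finset.range (i - 1), b ^ k)))
    (hbb : ∀ i ≤ D, (bb i : ℝ) = ((∑ k ∈ Finset.range D, b ^ k) - (∑ k ∈ Finset.range i, b ^ k)) *
      (β - α * (∑ k ∈ Finset.range i, b ^ k))) :
    ∃ γ ϱ : ℝ, ∀ x : V,
    let Dg : Matrix V V ℝ := Matrix.diagonal (fun v => b⁻¹ ^ G.dist x v)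
    let A : Matrix V V ℝ := Mf G (dl 1)
    A * A * A * Dg - Dg * (A * A * A) - ((b + b⁻¹) + 1) • (A * A * Dg * A - A * Dg * (A * A))
      - γ • (A * A * Dg - Dg * (A * A)) - ϱ • (A * Dg - Dg * A) = 0 := by
  have hb0 : b ≠ 0 := by linarith
  have hb1 : b - 1 ≠ 0 := by linarith
  have hbr : b * b⁻¹ = 1 := mul_inv_cancel₀ hb0
  have hne : ∀ j, b⁻¹ ^ (j+1) ≠ 1 := by
    intro j h
    have h1 : |b| ^ (j+1) = 1 := by
      rw [inv_pow, inv_eq_one] at h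
      rw [← abs_pow, h, abs_one]
    have h2 : 1 < |b| := by rw [abs_of_neg (by linarith)]; linarith
    have := one_lt_pow₀ h2 (Nat.succ_ne_zero j)
    exact absurd h1 this.ne'
  have hge : ∀ i, (∑ k ∈ Finset.range i, b ^ k) = (b ^ i - 1) / (b - 1) := fun i =>
    geom_sum_eq (by linarith) i
  have hc' : ∀ i ≤ D, (c i : ℝ) = (b ^ i - 1) / (b - 1) *
      (1 + α * ((b ^ i / b - 1) / (b - 1))) := by
    intro i hi
    rw [hc i hi, hge, hge]
    cases i with
    | zero => simp
    | succ m => rw [Nat.add_sub_cancel, pow_succ, mul_div_assoc, div_self hb0, mul_one]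
  have hbb' : ∀ i ≤ D, (bb i : ℝ) = ((b ^ D - 1) / (b - 1) - (b ^ i - 1) / (b - 1)) *
      (β - α * ((b ^ i - 1) / (b - 1))) := by
    intro i hi
    rw [hbb i hi, hge, hge]
  set s := (b - 1)⁻¹ with hs
  set C2 := α * s ^ 2 / b with hC2
  set C1 := s * (1 - α * s) - α * s ^ 2 / b with hC1
  set C0 := - s * (1 - α * s) with hC0
  set B2 := α * s ^ 2 with hB2
  set B1 := - s * (β + α * s) - α * s ^ 2 * b ^ D with hB1
  set B0 := s * b ^ D * (β + α * s) with hB0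
  have key := hA_of H (b := b) (r := b⁻¹) hbr C0 C1 C2 B0 B1 B2
    (by
      intro h hh
      rw [hc' h hh, hC0, hC1, hC2]
      simp only [div_eq_mul_inv, ← hs]
      ring)
    (by
      intro h hh
      rw [hbb' h hh, hB0, hB1, hB2]
      simp only [div_eq_mul_inv, ← hs]
      ring)
    (by rw [hC2, hB2]; field_simp; ring)
  refine ⟨((bb 0 - C0 - B0) * (2 - (b + b⁻¹))),
    (- C0 * B0 * (b - b⁻¹) ^ 2 - (2 - (b + b⁻¹)) * (bb 0 - C0 - B0) ^ 2), fun x => ?_⟩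
  exact TD G b⁻¹ (Mf G (dl 1)) (fun n => (bb 0 + C0 * (b ^ n - 1) + B0 * (b⁻¹ ^ n - 1)))
    (Mf_symm _) key (hall_of H _) (D+1) (hone_of H hne) (b + b⁻¹) _ _
    (fun n => theta_rec hbr _ _ _ n) x

open Classical in
lemma ent_right (H : DR G D c a bb) (f : ℕ → ℝ) (T : V → ℝ) (y z : V) :
    (Mf G f * Matrix.diagonal T * Mf G (dl 1)) y z =
      f (G.dist y z - 1) * ∑ v ∈ Cf G z y, T v + f (G.dist y z) * ∑ v ∈ Af G z y, T v
        + f (G.dist y z + 1) * ∑ v ∈ Bf G z y, T v := by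
  rw [SimpleGraph.dist_comm (u := y) (v := z), ← nbr_sum H.conn, Matrix.mul_apply]
  apply Finset.sum_congr rfl
  intro v _
  rw [Matrix.mul_diagonal, Mf_apply, Mf_apply, SimpleGraph.dist_comm (u := v) (v := z), dl_adj,
    SimpleGraph.dist_comm (u := y) (v := v)]
  simp only [SimpleGraph.dist_eq_one_iff_adj]
  split_ifs <;> simp

open Classical in
lemma ent_left (H : DR G D c a bb) (f : ℕ → ℝ) (T : V → ℝ) (y z : V) :
    (Mf G (dl 1) * Matrix.diagonal T * Mf G f) y z =
      f (G.dist y z - 1) * ∑ v ∈ Cf G y z, T v + f (G.dist y z) * ∑ v ∈ Af G y z, T v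
        + f (G.dist y z + 1) * ∑ v ∈ Bf G y z, T v := by
  rw [← nbr_sum H.conn, Matrix.mul_apply]
  apply Finset.sum_congr rfl
  intro v _
  rw [Matrix.mul_diagonal, Mf_apply, Mf_apply, dl_adj]
  simp only [SimpleGraph.dist_eq_one_iff_adj]
  split_ifs <;> simp [mul_comm]

end Bal
end TB
end

section
open Matrix
namespace TB

section Bal2
set_option linter.unusedSectionVars false
variable {V : Type*} [Fintype V] {G : SimpleGraph V}
variable {D : ℕ} {c a bb : ℕ → ℕ} 

lemma bal_exist (H : DR G D c a bb) (hD : 3 ≤ D) (ha1 : a 1 = 0) {t : V → V → ℝ} {β γ ϱ : ℝ}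
    (hβ : β ≠ 0) (hβ1 : β + 1 ≠ 0)
    (hTD : letI := Classical.decEq V
      ∀ x : V, 
      let Dg : Matrix V V ℝ := Matrix.diagonal (t x)
      let A : Matrix V V ℝ := Mf G (dl 1)
      A * A * A * Dg - Dg * (A * A * A) - (β + 1) • (A * A * Dg * A - A * Dg * (A * A))
        - γ • (A * A * Dg - Dg * (A * A)) - ϱ • (A * Dg - Dg * A) = 0) :
    ∃ ρ₂ ρ₃ ρ₄ : ℝ, ∀ x y z : V,
      (G.dist y z = 2 → ∑ v ∈ Af G y z, t x v - ∑ v ∈ Af G z y, t x v = ρ₂ * (t x y - t x z)) ∧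
      (G.dist y z = 3 → ∑ v ∈ Cf G y z, t x v - ∑ v ∈ Cf G z y, t x v = ρ₃ * (t x y - t x z)) ∧
      (G.dist y z = 3 → ∑ v ∈ Af G y z, t x v - ∑ v ∈ Af G z y, t x v = ρ₄ * (t x y - t x z)) := by
  classical
  set f2 := Lop c a bb (dl 1) with hf2
  set f3 := Lop c a bb f2 with hf3
  set f4 := Lop c a bb f3 with hf4
  have v21 : f2 1 = 0 := by simp [hf2, Lop, dl, ha1]
  have v22 : f2 2 = c 2 := by simp [hf2, Lop, dl]
  have v23 : f2 3 = 0 := by simp [hf2, Lop, dl]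
  have v24 : f2 4 = 0 := by simp [hf2, Lop, dl]
  have v25 : f2 5 = 0 := by simp [hf2, Lop, dl]
  have v32 : f3 2 = a 2 * c 2 := by simp [hf3, Lop, v21, v22, v23]
  have v33 : f3 3 = c 3 * c 2 := by simp [hf3, Lop, v24, v22, v23]
  have v34 : f3 4 = 0 := by simp [hf3, Lop, v24, v25, v23]
  have c2 : (c 2 : ℝ) ≠ 0 := by have := H.c_pos (m := 1) (by omega); positivity
  have c3 : (c 3 : ℝ) ≠ 0 := by have := H.c_pos (m := 2) (by omega); positivity
  have e2 : Mf G (dl 1) * Mf G (dl 1) = Mf G f2 := A_mul_Mf H _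
  have e3 : Mf G f2 * Mf G (dl 1) = Mf G f3 := Mf_mul_A H _
  have e3' : Mf G (dl 1) * Mf G f2 = Mf G f3 := A_mul_Mf H _
  have e4 : Mf G f3 * Mf G (dl 1) = Mf G f4 := Mf_mul_A H _
  have e4' : Mf G (dl 1) * Mf G f3 = Mf G f4 := A_mul_Mf H _
  have TD1 : ∀ x : V, Mf G f3 * diagonal (t x) - diagonal (t x) * Mf G f3
      - (β + 1) • (Mf G f2 * diagonal (t x) * Mf G (dl 1) - Mf G (dl 1) * diagonal (t x) * Mf G f2)
      - γ • (Mf G f2 * diagonal (t x) - diagonal (t x) * Mf G f2)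
      - ϱ • (Mf G (dl 1) * diagonal (t x) - diagonal (t x) * Mf G (dl 1)) = 0 := by
    intro x
    have h := hTD x
    simp only at h
    rw [e2, e3] at h
    convert h
  have TD2 : ∀ x : V, Mf G f4 * diagonal (t x) - diagonal (t x) * Mf G f4
      - β • (Mf G f3 * diagonal (t x) * Mf G (dl 1) - Mf G (dl 1) * diagonal (t x) * Mf G f3)
      - γ • (Mf G f3 * diagonal (t x) - diagonal (t x) * Mf G f3)
      - γ • (Mf G f2 * diagonal (t x) * Mf G (dl 1) - Mf G (dl 1) * diagonal (t x) * Mf G f2)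
      - ϱ • (Mf G f2 * diagonal (t x) - diagonal (t x) * Mf G f2) = 0 := by
    intro x
    have h1 := congrArg (fun Y => Mf G (dl 1) * Y + Y * Mf G (dl 1)) (TD1 x)
    simp only [mul_zero, zero_mul, add_zero] at h1
    have s1 : ∀ Y, Mf G (dl 1) * (Mf G f2 * Y) = Mf G f3 * Y := by
      intro Y; rw [← mul_assoc, e3']
    have s2 : ∀ Y, Mf G (dl 1) * (Mf G (dl 1) * Y) = Mf G f2 * Y := by
      intro Y; rw [← mul_assoc, e2]
    have s3 : ∀ Y, Mf G (dl 1) * (Mf G f3 * Y) = Mf G f4 * Y := by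
      intro Y; rw [← mul_assoc, e4']
    simp only [mul_sub, sub_mul, mul_smul_comm, smul_mul_assoc, mul_assoc, e2, e3, e4, s1, s2, s3,
      smul_sub] at h1
    rw [← h1]
    simp only [smul_sub, mul_assoc]
    module
  set ρ₃ := f3 3 / ((β + 1) * c 2) with hρ₃
  have d12 : dl 1 2 = 0 := by simp [dl]
  have d13 : dl 1 3 = 0 := by simp [dl]
  have E1 : ∀ x y z, (TB.Mf G f3 y z * t x z - t x y * Mf G f3 y z
      - (β + 1) * ((Mf G f2 * diagonal (t x) * Mf G (dl 1)) y z
          - (Mf G (dl 1) * diagonal (t x) * Mf G f2) y z)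
      - γ * (Mf G f2 y z * t x z - t x y * Mf G f2 y z)
      - ϱ * (Mf G (dl 1) y z * t x z - t x y * Mf G (dl 1) y z)) = 0 := by
    intro x y z
    have h := congrFun (congrFun (TD1 x) y) z
    simpa only [Matrix.sub_apply, Matrix.smul_apply, Matrix.mul_diagonal, Matrix.diagonal_mul,
      smul_eq_mul, Matrix.zero_apply] using h
  have E2 : ∀ x y z, (TB.Mf G f4 y z * t x z - t x y * Mf G f4 y z
      - β * ((Mf G f3 * diagonal (t x) * Mf G (dl 1)) y z
          - (Mf G (dl 1) * diagonal (t x) * Mf G f3) y z)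
      - γ * (Mf G f3 y z * t x z - t x y * Mf G f3 y z)
      - γ * ((Mf G f2 * diagonal (t x) * Mf G (dl 1)) y z
          - (Mf G (dl 1) * diagonal (t x) * Mf G f2) y z)
      - ϱ * (Mf G f2 y z * t x z - t x y * Mf G f2 y z)) = 0 := by
    intro x y z
    have h := congrFun (congrFun (TD2 x) y) z
    simpa only [Matrix.sub_apply, Matrix.smul_apply, Matrix.mul_diagonal, Matrix.diagonal_mul,
      smul_eq_mul, Matrix.zero_apply] using h
  have hC : ∀ x y z, G.dist y z = 3 →
      ∑ v ∈ Cf G y z, t x v - ∑ v ∈ Cf G z y, t x v = ρ₃ * (t x y - t x z) := by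
    intro x y z h
    have h1 := E1 x y z
    rw [ent_left H, ent_right H] at h1
    simp only [Mf_apply, h, d13, v22, v23, v24] at h1
    rw [hρ₃, div_mul_eq_mul_div, eq_div_iff (mul_ne_zero hβ1 c2)]
    norm_num [v22, v23, v24] at h1
    linear_combination h1
  refine ⟨(f3 2 - γ * c 2) / ((β + 1) * c 2), ρ₃,
    (f4 3 - β * f3 2 * ρ₃ - γ * f3 3 - γ * c 2 * ρ₃) / (β * f3 3), fun x y z => ⟨?_, hC x y z, ?_⟩⟩
  · intro h
    have h1 := E1 x y z
    rw [ent_left H, ent_right H] at h1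
    simp only [Mf_apply, h, d12, v22, v23, v24] at h1
    norm_num [v21, v22, v23, v24] at h1
    rw [div_mul_eq_mul_div, eq_div_iff (mul_ne_zero hβ1 c2)]
    linear_combination h1
  · intro h
    have h1 := E2 x y z
    rw [ent_left H, ent_right H, ent_left H, ent_right H] at h1
    simp only [Mf_apply, h] at h1
    norm_num [v22, v23, v24, v34] at h1
    have f33 : f3 3 ≠ 0 := by rw [v33]; exact mul_ne_zero c3 c2
    rw [div_mul_eq_mul_div, eq_div_iff (mul_ne_zero hβ f33)]
    linear_combination h1 - (β * f3 2 + γ * c 2) * (hC x y z h)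

end Bal2
end TB
end

section
namespace TB

section Dat0
set_option linter.unusedSectionVars false
variable {V : Type*} [Fintype V] {G : SimpleGraph V}

structure Dat (G : SimpleGraph V) (b : ℝ) (c2 c3 a2 a3 : ℕ) : Prop where
  conn : G.Connected
  tf : ∀ x y z : V, G.Adj x y → G.Adj y z → ¬ G.Adj x z
  hb : b ≤ -2
  ea2 : (a2 : ℝ) = (1 + b) * (1 + b - c2)
  ea3 : (a3 : ℝ) = (1 + b + b^2) * a2
  ec3 : (c3 : ℝ) = (1 + b + b^2) * (c2 - b)
  a2pos : 0 < a2
  c2pos : 0 < c2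
  C2 : ∀ x y : V, G.dist x y = 2 → (Cf G x y).card = c2
  A2 : ∀ x y : V, G.dist x y = 2 → (Af G x y).card = a2
  C3 : ∀ x y : V, G.dist x y = 3 → (Cf G x y).card = c3
  A3 : ∀ x y : V, G.dist x y = 3 → (Af G x y).card = a3
  bal2 : ∀ x y z : V, G.dist y z = 2 →
    ∑ v ∈ Af G y z, b⁻¹ ^ G.dist x v - ∑ v ∈ Af G z y, b⁻¹ ^ G.dist x v
      = a2 / (1 + b) * (b⁻¹ ^ G.dist x y - b⁻¹ ^ G.dist x z)
  bal3C : ∀ x y z : V, G.dist y z = 3 →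
    ∑ v ∈ Cf G y z, b⁻¹ ^ G.dist x v - ∑ v ∈ Cf G z y, b⁻¹ ^ G.dist x v
      = b * (c2 - b) * (b⁻¹ ^ G.dist x y - b⁻¹ ^ G.dist x z)
  bal3A : ∀ x y z : V, G.dist y z = 3 →
    ∑ v ∈ Af G y z, b⁻¹ ^ G.dist x v - ∑ v ∈ Af G z y, b⁻¹ ^ G.dist x v
      = a2 * (1 + b) * (b⁻¹ ^ G.dist x y - b⁻¹ ^ G.dist x z)

theorem mkDat {D : ℕ} {c a bb : ℕ → ℕ} (H : DR G D c a bb) (hD : 3 ≤ D) {b α β : ℝ}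
    (hb0 : b ≠ 0) (hb1 : b ≠ -1)
    (hc : ∀ i ≤ D, (c i : ℝ) = (∑ k ∈ Finset.range i, b ^ k) *
      (1 + α * (∑ k ∈ Finset.range (i - 1), b ^ k)))
    (hbb : ∀ i ≤ D, (bb i : ℝ) = ((∑ k ∈ Finset.range D, b ^ k) - (∑ k ∈ Finset.range i, b ^ k)) *
      (β - α * (∑ k ∈ Finset.range i, b ^ k)))
    (ha1 : a 1 = 0) (ha2 : a 2 ≠ 0) : Dat G b (c 2) (c 3) (a 2) (a 3) := by
  obtain ⟨hb, n1, n2, n3⟩ := numerics H hD hb0 hb1 hc hbb ha1 ha2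
  obtain ⟨γ, ϱ, hTD⟩ := TD_of H hb hc hbb
  have p1 : 0 < 1 + b + b ^ 2 := by nlinarith
  have hβ : b + b⁻¹ ≠ 0 := by
    intro h
    have : b * b + b * b⁻¹ = 0 := by rw [← mul_add, h, mul_zero]
    rw [mul_inv_cancel₀ hb0] at this
    nlinarith
  have hβ1 : b + b⁻¹ + 1 ≠ 0 := by
    intro h
    have : b * b + b * b⁻¹ + b = 0 := by linear_combination b * h
    rw [mul_inv_cancel₀ hb0] at this
    nlinarith
  obtain ⟨ρ₂, ρ₃, ρ₄, hbal⟩ := bal_exist H hD ha1 (t := fun x v => b⁻¹ ^ G.dist x v) (γ := γ)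
    (ϱ := ϱ) hβ hβ1 (by intro x; convert hTD x)
  have hr : b * b⁻¹ = 1 := mul_inv_cancel₀ hb0
  set r := b⁻¹ with hrd
  have cA : ∀ y z v : V, v ∈ Af G y z → r ^ G.dist y v = r := by
    intro y z v hv
    rw [SimpleGraph.dist_eq_one_iff_adj.mpr (mem_Af.mp hv).1, pow_one]
  have cC : ∀ y z v : V, v ∈ Cf G y z → r ^ G.dist y v = r := by
    intro y z v hv
    rw [SimpleGraph.dist_eq_one_iff_adj.mpr (mem_Cf.mp hv).1, pow_one]
  have cA' : ∀ y z v : V, v ∈ Af G z y → r ^ G.dist y v = r ^ G.dist y z := by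
    intro y z v hv
    rw [SimpleGraph.dist_comm, (mem_Af.mp hv).2, SimpleGraph.dist_comm]
  have cC' : ∀ y z v : V, v ∈ Cf G z y → r ^ G.dist y v = r ^ (G.dist y z - 1) := by
    intro y z v hv
    rw [SimpleGraph.dist_comm, SimpleGraph.dist_comm (u := y), ← (mem_Cf.mp hv).2]; rfl
  have hbm : (b - 1) ≠ 0 := by linarith
  have hbp : (1 + b) ≠ 0 := by intro h; apply hb1; linarith
  have hrne : r ≠ 0 := inv_ne_zero hb0
  have br : b = r⁻¹ := by rw [hrd, inv_inv]
  have hρ₂ : ρ₂ = a 2 / (1 + b) := by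
    obtain ⟨y, z, h⟩ := H.exd (m := 2) (by omega)
    have h1 := (hbal y y z).1 h
    rw [Finset.sum_congr rfl (cA y z), Finset.sum_congr rfl (cA' y z)] at h1
    simp only [Finset.sum_const, H.hA, SimpleGraph.dist_self, nsmul_eq_mul, h,
      SimpleGraph.dist_comm (u := z) (v := y)] at h1
    rw [eq_div_iff hbp]
    have h2 : (a 2 : ℝ) * (b - 1) = ρ₂ * (b ^ 2 - 1) := by
      linear_combination b ^ 2 * h1 - (a 2 * b - a 2 * (b * r + 1) + ρ₂ * (b * r + 1)) * hr
    have h3 : (b - 1) * (ρ₂ * (1 + b) - a 2) = 0 := by linear_combination - h2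
    have := (mul_eq_zero.mp h3).resolve_left hbm
    linarith
  have hρ₃ : ρ₃ = b * (c 2 - b) := by
    obtain ⟨y, z, h⟩ := H.exd (m := 3) (by omega)
    have h1 := (hbal y y z).2.1 h
    rw [Finset.sum_congr rfl (cC y z), Finset.sum_congr rfl (cC' y z)] at h1
    simp only [Finset.sum_const, H.hC, SimpleGraph.dist_self, nsmul_eq_mul, h,
      SimpleGraph.dist_comm (u := z) (v := y)] at h1
    rw [n3] at h1
    have h3 : ((b - 1) * (1 + b + b ^ 2)) * (ρ₃ - b * (c 2 - b)) = 0 := by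
      norm_num at h1
      linear_combination - b ^ 3 * h1 + (((1 + b + b ^ 2) * (c 2 - b)) * (b ^ 2 - b * (b * r + 1))
        + ρ₃ * ((b * r) ^ 2 + b * r + 1)) * hr
    have := (mul_eq_zero.mp h3).resolve_left (mul_ne_zero hbm p1.ne')
    linarith
  have hρ₄ : ρ₄ = a 2 * (1 + b) := by
    obtain ⟨y, z, h⟩ := H.exd (m := 3) (by omega)
    have h1 := (hbal y y z).2.2 h
    rw [Finset.sum_congr rfl (cA y z), Finset.sum_congr rfl (cA' y z)] at h1
    simp only [Finset.sum_const, H.hA, SimpleGraph.dist_self, nsmul_eq_mul, h,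
      SimpleGraph.dist_comm (u := z) (v := y)] at h1
    rw [n2] at h1
    have h3 : ((b - 1) * (1 + b + b ^ 2)) * (ρ₄ - a 2 * (1 + b)) = 0 := by
      linear_combination - b ^ 3 * h1 + (((1 + b + b ^ 2) * a 2) *
        (b ^ 2 - ((b * r) ^ 2 + b * r + 1)) + ρ₄ * ((b * r) ^ 2 + b * r + 1)) * hr
    have := (mul_eq_zero.mp h3).resolve_left (mul_ne_zero hbm p1.ne')
    linarith
  refine ⟨H.conn, ?_, hb, n1, n2, n3, Nat.pos_of_ne_zero ha2, H.c_pos (by omega),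
    fun x y h => h ▸ H.hC x y, fun x y h => h ▸ H.hA x y, fun x y h => h ▸ H.hC x y,
    fun x y h => h ▸ H.hA x y, ?_, ?_, ?_⟩
  · intro x y z h1 h2 h3
    have h := H.hA x y
    rw [SimpleGraph.dist_eq_one_iff_adj.mpr h1, ha1, Finset.card_eq_zero] at h
    have : z ∈ Af G x y := mem_Af.mpr ⟨h3, by
      rw [SimpleGraph.dist_eq_one_iff_adj.mpr h1, SimpleGraph.dist_eq_one_iff_adj.mpr h2.symm]⟩
    rw [h] at this
    simp at this
  · rw [← hρ₂]; exact fun x y z => (hbal x y z).1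
  · rw [← hρ₃]; exact fun x y z => (hbal x y z).2.1
  · rw [← hρ₄]; exact fun x y z => (hbal x y z).2.2

end Dat0
end TB
end

section
namespace TB

section Ctx0
set_option linter.unusedSectionVars false
variable {V : Type*} [Fintype V] {G : SimpleGraph V}

lemma adj1 {x y : V} (h : G.Adj x y) : G.dist x y = 1 := SimpleGraph.dist_eq_one_iff_adj.mpr h

lemma d2_of (hc : G.Connected) (tf : ∀ x y z : V, G.Adj x y → G.Adj y z → ¬ G.Adj x z)
    {s r p : V} (h1 : G.Adj s r) (h2 : G.Adj s p) (h : r ≠ p) : G.dist r p = 2 := by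
  have h3 := dist_le_succ hc h1 p
  rw [adj1 h2] at h3
  have h4 := hc.pos_dist_of_ne h
  have h5 : G.dist r p ≠ 1 := by
    intro h5
    exact tf s r p h1 (SimpleGraph.dist_eq_one_iff_adj.mp h5) h2
  omega

lemma noPar (hc : G.Connected) (tf : ∀ x y z : V, G.Adj x y → G.Adj y z → ¬ G.Adj x z)
    {q κ : ℝ} {h ah : ℕ} (hq0 : q ≠ 0) (hq1 : q ≠ 1) (hqh : q ^ h ≠ 1)
    (hcard : ∀ x y : V, G.dist x y = h → (Af G x y).card = ah)
    (hκ : ah * (q - q ^ h) = κ * (1 - q ^ h))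
    (bal : ∀ x y z : V, G.dist y z = h →
      ∑ v ∈ Af G y z, q ^ G.dist x v - ∑ v ∈ Af G z y, q ^ G.dist x v
      = κ * (q ^ G.dist x y - q ^ G.dist x z))
    {x z s w : V} (hxz : G.dist x z = h) (hs : G.Adj x s) (hsz : G.dist s z = h + 1)
    (hw : w ∈ Af G z x) : G.dist s w = h + 1 := by
  have h1 := bal s x z hxz
  have h2 : ∀ v ∈ Af G x z, q ^ G.dist s v = q ^ 2 := by
    intro v hv
    rw [mem_Af] at hv
    rw [d2_of hc tf hs hv.1]
    rintro rfl; omega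
  rw [Finset.sum_congr rfl h2, Finset.sum_const, hcard x z hxz, nsmul_eq_mul, hsz,
    adj1 hs.symm] at h1
  have hzx : G.dist z x = h := by rw [SimpleGraph.dist_comm]; exact hxz
  have h3 : ∀ v ∈ Af G z x, G.dist s v = h ∨ G.dist s v = h + 1 := by
    intro v hv
    rw [mem_Af] at hv
    have a1 := dist_le_succ hc hs v
    have a2 := dist_le_succ hc hv.1 s
    have a3 := dist_ge_pred hc hv.1 s
    rw [SimpleGraph.dist_comm (u := x)] at a1
    rw [SimpleGraph.dist_comm (u := v), SimpleGraph.dist_comm (u := z)] at a2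
    rw [SimpleGraph.dist_comm (u := z), SimpleGraph.dist_comm (u := v)] at a3
    omega
  by_contra hcon
  classical
  set K := (Af G z x).filter fun v => G.dist s v = h with hK
  have h4 : ∑ v ∈ Af G z x, q ^ G.dist s v = ah * q ^ (h+1) + K.card * (q ^ h - q ^ (h+1)) := by
    have : ∀ v ∈ Af G z x, q ^ G.dist s v = q ^ (h+1) +
        (if G.dist s v = h then (q ^ h - q ^ (h+1)) else 0) := by
      intro v hv
      rcases h3 v hv with h5 | h5
      · rw [if_pos h5, h5]; ring
      · rw [if_neg (by omega), h5, add_zero]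
    rw [Finset.sum_congr rfl this, Finset.sum_add_distrib, Finset.sum_const, hcard z x hzx,
      ← Finset.sum_filter, Finset.sum_const, nsmul_eq_mul, nsmul_eq_mul]
  have h5 : (0 : ℝ) < K.card := by
    have : 0 < K.card := Finset.card_pos.mpr ⟨w, Finset.mem_filter.mpr
      ⟨hw, (h3 w hw).resolve_right hcon⟩⟩
    exact_mod_cast this
  rw [h4] at h1
  have h6 : (K.card : ℝ) * ((q ^ h * (1 - q)) * (1 - q ^ h)) = 0 := by
    linear_combination (-(1 - q ^ h)) * h1 + (q - q ^ (h+1)) * hκ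
  have h7 : q ^ h * (1 - q) * (1 - q ^ h) ≠ 0 :=
    mul_ne_zero (mul_ne_zero (pow_ne_zero _ hq0) (sub_ne_zero.mpr hq1.symm))
      (sub_ne_zero.mpr hqh.symm)
  exact (mul_ne_zero h5.ne' h7) h6

structure Ctx (G : SimpleGraph V) (t : ℕ → ℝ) (h γ : ℕ) (κ : ℝ) : Prop where
  conn : G.Connected
  tf : ∀ x y z : V, G.Adj x y → G.Adj y z → ¬ G.Adj x z
  t02 : t 0 ≠ t 2
  hpos : 0 < h
  hN : ∀ x y : V, G.dist x y = h → (Nf G x y).card = γ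
  S : ∀ y z : V, G.dist y z = h → ∀ v, ∑ s ∈ Nf G y z, t (G.dist v s) - κ * t (G.dist v y) =
    ∑ s ∈ Nf G z y, t (G.dist v s) - κ * t (G.dist v z)
  E : ∀ x z z' : V, G.dist x z = h → G.dist x z' = h → G.Adj z z' → Nf G x z = Nf G x z'
  mv : ∀ x y s : V, G.dist x y = h → G.Adj x s → G.dist s y + 1 = h →
    ∃ y', G.Adj y y' ∧ G.dist x y' = h ∧ G.dist s y' = h

lemma E_of (hc : G.Connected) {h : ℕ}
    (np : ∀ x z s w : V, G.dist x z = h → G.Adj x s → G.dist s z = h + 1 → w ∈ Af G z x →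
      G.dist s w = h + 1) (x z z' : V) (h1 : G.dist x z = h) (h2 : G.dist x z' = h)
    (h3 : G.Adj z z') : Nf G x z = Nf G x z' := by
  have key : ∀ z z' : V, G.dist x z = h → G.dist x z' = h → G.Adj z z' → Nf G x z ⊆ Nf G x z' := by
    intro z z' h1 h2 h3 s hs
    rw [mem_Nf] at hs ⊢
    refine ⟨hs.1, ?_⟩
    by_contra hcon
    have a1 := dist_le_succ hc hs.1 z'
    have a2 := np x z' s z h2 hs.1 (by omega) (mem_Af.mpr ⟨h3.symm, by
      rw [SimpleGraph.dist_comm, h1, SimpleGraph.dist_comm, h2]⟩)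
    omega
  exact Finset.Subset.antisymm (key z z' h1 h2 h3) (key z' z h2 h1 h3.symm)

lemma Nf_sum (hc : G.Connected) (x y : V) (T : V → ℝ) :
    ∑ v ∈ Nf G x y, T v = ∑ v ∈ Cf G x y, T v + ∑ v ∈ Af G x y, T v := by
  classical
  have e : Nf G x y = Cf G x y ∪ Af G x y := by
    ext s
    rw [Finset.mem_union, mem_Nf, mem_Cf, mem_Af]
    constructor
    · rintro ⟨h1, h2⟩
      have := dist_ge_pred hc h1 y
      rcases Nat.lt_or_ge (G.dist s y) (G.dist x y) with h | h
      · exact Or.inl ⟨h1, by omega⟩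
      · exact Or.inr ⟨h1, by omega⟩
    · rintro (⟨h1, h2⟩ | ⟨h1, h2⟩) <;> exact ⟨h1, by omega⟩
  rw [e, Finset.sum_union]
  rw [Finset.disjoint_left]
  intro s h1 h2
  rw [mem_Cf] at h1
  rw [mem_Af] at h2
  omega

lemma Nf_card (hc : G.Connected) (x y : V) :
    (Nf G x y).card = (Cf G x y).card + (Af G x y).card := by
  have := Nf_sum hc x y (fun _ => 1)
  simp at this
  exact_mod_cast this

lemma Cf_two {x y : V} (h : G.dist x y = 2) : Cf G x y = Cf G y x := by
  ext s
  rw [mem_Cf, mem_Cf, SimpleGraph.dist_comm (u := y) (v := x), h]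
  constructor
  · rintro ⟨h1, h2⟩
    exact ⟨(SimpleGraph.dist_eq_one_iff_adj.mp (by omega : G.dist s y = 1)).symm,
      by rw [adj1 h1.symm]⟩
  · rintro ⟨h1, h2⟩
    exact ⟨(SimpleGraph.dist_eq_one_iff_adj.mp (by omega : G.dist s x = 1)).symm,
      by rw [adj1 h1.symm]⟩

variable {b : ℝ} {c2 c3 a2 a3 : ℕ}

lemma Dat.hq (H : Dat G b c2 c3 a2 a3) : b⁻¹ ≠ 0 ∧ b⁻¹ ≠ 1 ∧ b⁻¹ ^ 2 ≠ 1 ∧ b⁻¹ ^ 3 ≠ 1 := by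
  have := H.hb
  refine ⟨inv_ne_zero (by linarith), ?_, ?_, ?_⟩
  · rw [Ne, inv_eq_one]; intro h; linarith
  · rw [Ne, inv_pow, inv_eq_one]; intro h; nlinarith
  · rw [Ne, inv_pow, inv_eq_one]; intro h
    have : b ^ 3 < 0 := by
      have : b ^ 3 = b * (b * b) := by ring
      rw [this]; exact mul_neg_of_neg_of_pos (by linarith) (by nlinarith)
    linarith

lemma Dat.a23 (H : Dat G b c2 c3 a2 a3) : a2 < a3 := by
  have h1 := H.hb
  have h2 := H.ea3
  have h3 : (0 : ℝ) < a2 := by exact_mod_cast H.a2pos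
  have : (a2 : ℝ) < a3 := by
    rw [h2]
    have : 1 < 1 + b + b ^ 2 := by nlinarith
    nlinarith
  exact_mod_cast this

lemma Dat.ctx2 (H : Dat G b c2 c3 a2 a3) :
    Ctx G (fun i => b⁻¹ ^ i) 2 (c2 + a2) (a2 / (1 + b)) := by
  obtain ⟨q0, q1, q2, q3⟩ := H.hq
  have hb := H.hb
  have hbp : 1 + b ≠ 0 := by linarith
  have hr : b * b⁻¹ = 1 := mul_inv_cancel₀ (by linarith)
  refine ⟨H.conn, H.tf, by simpa using q2.symm, by norm_num, ?_, ?_, ?_, ?_⟩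
  · intro x y h
    rw [Nf_card H.conn, H.C2 x y h, H.A2 x y h]
  · intro y z h v
    rw [Nf_sum H.conn, Nf_sum H.conn, Cf_two h]
    have := H.bal2 v y z h
    linarith
  · apply E_of H.conn
    intro x z s w
    refine noPar H.conn H.tf q0 q1 q2 H.A2 ?_ H.bal2
    rw [div_mul_eq_mul_div, eq_div_iff hbp]
    generalize b⁻¹ = r at *
    linear_combination (a2 : ℝ) * (1 - r) * hr
  · intro x y s h1 h2 h3
    have h1' : G.dist y x = 2 := by rw [SimpleGraph.dist_comm, h1]
    have : 0 < (Af G y x).card := by rw [H.A2 y x h1']; exact H.a2pos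
    obtain ⟨y', hy'⟩ := Finset.card_pos.mp this
    rw [mem_Af] at hy'
    have hs : G.Adj s y := SimpleGraph.dist_eq_one_iff_adj.mp (by omega)
    refine ⟨y', hy'.1, by rw [SimpleGraph.dist_comm, hy'.2, h1'], ?_⟩
    apply d2_of H.conn H.tf hs.symm hy'.1
    rintro rfl
    have := adj1 h2.symm
    omega

lemma Dat.ctx3 (H : Dat G b c2 c3 a2 a3) :
    Ctx G (fun i => b⁻¹ ^ i) 3 (c3 + a3) (a2 * (1 + b) + b * (c2 - b)) := by
  obtain ⟨q0, q1, q2, q3⟩ := H.hq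
  have hb := H.hb
  have hbp : 1 + b ≠ 0 := by linarith
  have hr : b * b⁻¹ = 1 := mul_inv_cancel₀ (by linarith)
  refine ⟨H.conn, H.tf, by simpa using q2.symm, by norm_num, ?_, ?_, ?_, ?_⟩
  · intro x y h
    rw [Nf_card H.conn, H.C3 x y h, H.A3 x y h]
  · intro y z h v
    rw [Nf_sum H.conn, Nf_sum H.conn]
    have h1 := H.bal3C v y z h
    have h2 := H.bal3A v y z h
    linarith
  · apply E_of H.conn
    intro x z s w
    refine noPar H.conn H.tf q0 q1 q3 H.A3 ?_ H.bal3A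
    rw [H.ea3]
    generalize b⁻¹ = r at *
    linear_combination (a2 : ℝ) * ((1 + b) - r ^ 2 * b - r) * hr
  · intro x y s h1 h2 h3
    have h1' : G.dist y x = 3 := by rw [SimpleGraph.dist_comm, h1]
    have hsy : G.dist y s = 2 := by rw [SimpleGraph.dist_comm]; omega
    have hlt : (Af G y s).card < (Af G y x).card := by
      rw [H.A3 y x h1', H.A2 y s hsy]; exact H.a23
    obtain ⟨y', hy', hn⟩ := Finset.exists_mem_notMem_of_card_lt_card hlt
    rw [mem_Af] at hy' hn
    refine ⟨y', hy'.1, by rw [SimpleGraph.dist_comm, hy'.2, h1'], ?_⟩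
    have a1 := dist_le_succ H.conn hy'.1 s
    have a2 := dist_ge_pred H.conn h2 y'
    have a3 : G.dist y' s ≠ G.dist y s := fun h => hn ⟨hy'.1, h⟩
    rw [SimpleGraph.dist_comm (u := x), SimpleGraph.dist_comm (u := s)] at a2
    rw [SimpleGraph.dist_comm (u := s)]
    omega

end Ctx0
end TB
end

section
namespace TB

section Wfr
set_option linter.unusedSectionVars false
variable {V : Type*} [Fintype V] {G : SimpleGraph V}

noncomputable def Wf (G : SimpleGraph V) (t : ℕ → ℝ) (κ : ℝ) (x y v : V) : ℝ :=
  ∑ s ∈ Nf G x y, t (G.dist v s) - κ * t (G.dist v x)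

def WP (G : SimpleGraph V) (t : ℕ → ℝ) (h : ℕ) (κ : ℝ) (w : V → ℝ) (s y : V) : Prop :=
  G.dist s y = h ∧ Wf G t κ s y = w

def Om (G : SimpleGraph V) (t : ℕ → ℝ) (h : ℕ) (κ : ℝ) (w : V → ℝ) (s : V) : Prop :=
  ∃ y, WP G t h κ w s y

variable {t : ℕ → ℝ} {h γ : ℕ} {κ : ℝ} {w : V → ℝ} {s y y' r s' : V}

lemma dcomm (x y : V) : G.dist x y = G.dist y x := SimpleGraph.dist_comm

lemma adj_of {x y : V} (h : G.dist x y = 1) : G.Adj x y := SimpleGraph.dist_eq_one_iff_adj.mp h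

namespace Ctx
variable (K : Ctx G t h γ κ)
include K

lemma symm (hw : WP G t h κ w s y) : WP G t h κ w y s := by
  obtain ⟨h1, h2⟩ := hw
  refine ⟨by rw [dcomm, h1], ?_⟩
  rw [← h2]
  funext v
  exact (K.S s y h1 v).symm

lemma right (hw : WP G t h κ w s y) (ha : G.Adj y y') (hd : G.dist s y' = h) :
    WP G t h κ w s y' := by
  obtain ⟨h1, h2⟩ := hw
  refine ⟨hd, ?_⟩
  rw [← h2]
  funext v
  rw [Wf, Wf, K.E s y y' h1 hd ha]

lemma left (hw : WP G t h κ w s y) (ha : G.Adj s s') (hd : G.dist s' y = h) :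
    WP G t h κ w s' y :=
  K.symm (K.right (K.symm hw) ha (by rw [dcomm, hd]))

lemma val_self (hw : WP G t h κ w s y) : w s = γ * t 1 - κ * t 0 := by
  obtain ⟨h1, h2⟩ := hw
  rw [← h2, Wf, SimpleGraph.dist_self]
  have : ∀ v ∈ Nf G s y, t (G.dist s v) = t 1 := by
    intro v hv; rw [adj1 (mem_Nf.mp hv).1]
  rw [Finset.sum_congr rfl this, Finset.sum_const, K.hN s y h1, nsmul_eq_mul]

lemma val_out (hw : WP G t h κ w s y) (ha : G.Adj s r) (hr : r ∉ Nf G s y) :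
    w r = γ * t 2 - κ * t 1 := by
  obtain ⟨h1, h2⟩ := hw
  rw [← h2, Wf, adj1 ha.symm]
  have : ∀ v ∈ Nf G s y, t (G.dist r v) = t 2 := by
    intro v hv
    rw [d2_of K.conn K.tf ha (mem_Nf.mp hv).1]
    rintro rfl; exact hr hv
  rw [Finset.sum_congr rfl this, Finset.sum_const, K.hN s y h1, nsmul_eq_mul]

lemma val_in (hw : WP G t h κ w s y) (hr : r ∈ Nf G s y) :
    w r = t 0 + (γ - 1) * t 2 - κ * t 1 := by
  classical
  obtain ⟨h1, h2⟩ := hw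
  have ha := (mem_Nf.mp hr).1
  rw [← h2, Wf, adj1 ha.symm, ← Finset.add_sum_erase _ _ hr, SimpleGraph.dist_self]
  have : ∀ v ∈ (Nf G s y).erase r, t (G.dist r v) = t 2 := by
    intro v hv
    rw [Finset.mem_erase] at hv
    rw [d2_of K.conn K.tf ha (mem_Nf.mp hv.2).1 hv.1.symm]
  have hc := Finset.card_erase_add_one hr
  rw [K.hN s y h1] at hc
  have hc' : (((Nf G s y).erase r).card : ℝ) = γ - 1 := by
    rw [← hc]; push_cast; ring
  rw [Finset.sum_congr rfl this, Finset.sum_const, nsmul_eq_mul, hc']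

lemma nbr (hw : WP G t h κ w s y) (hr : r ∈ Nf G s y) : Om G t h κ w r := by
  rw [mem_Nf] at hr
  have h1 := dist_ge_pred K.conn hr.1 y
  have h2 := hw.1
  rcases Nat.lt_or_ge (G.dist r y) h with h3 | h3
  · obtain ⟨y', a1, a2, a3⟩ := K.mv s y r h2 hr.1 (by omega)
    exact ⟨y', K.left (K.right hw a1 a2) hr.1 a3⟩
  · exact ⟨y, K.left hw hr.1 (by omega)⟩

lemma nbr_iff (hw : WP G t h κ w s y) (ha : G.Adj s r) : Om G t h κ w r ↔ r ∈ Nf G s y := by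
  refine ⟨?_, K.nbr hw⟩
  rintro ⟨z, hz⟩
  by_contra hn
  have v1 := K.val_self hz
  have v2 := K.val_out hw ha hn
  obtain ⟨m, hm⟩ : ∃ m, h = m + 1 := ⟨h - 1, by have := K.hpos; omega⟩
  obtain ⟨p, hp1, hp2⟩ := exists_closer K.conn (hw.1.trans hm)
  have hp : p ∈ Nf G s y := mem_Nf.mpr ⟨hp1, by rw [hw.1]; omega⟩
  obtain ⟨z', hz'⟩ := K.nbr hw hp
  have v3 := K.val_self hz'
  have v4 := K.val_in hw hp
  apply K.t02
  linarith

lemma om_dist (hw : WP G t h κ w s y) (ha : G.Adj s r) (ho : Om G t h κ w r) :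
    G.dist r y ≤ h := by
  have := ((K.nbr_iff hw ha).mp ho)
  rw [mem_Nf, hw.1] at this
  exact this.2

end Ctx

/-- closed regular subsets -/
structure Cl (G : SimpleGraph V) (Ω : Set V) (γ m : ℕ) : Prop where
  closed : ∀ u v s : V, u ∈ Ω → v ∈ Ω → G.Adj u s → G.dist s v ≤ G.dist u v → s ∈ Ω
  reg : ∀ u ∈ Ω, {v | v ∈ Ω ∧ G.Adj u v}.ncard = γ
  diam : ∀ u v : V, u ∈ Ω → v ∈ Ω → G.dist u v ≤ m

def Rel (G : SimpleGraph V) (t : ℕ → ℝ) (h : ℕ) (κ : ℝ) (w : V → ℝ) (p q : V) : Prop :=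
  G.Adj p q ∧ Om G t h κ w p ∧ Om G t h κ w q

lemma Rel_om {p q : V} (hp : Om G t h κ w p)
    (hr : Relation.ReflTransGen (Rel G t h κ w) p q) : Om G t h κ w q := by
  induction hr with
  | refl => exact hp
  | tail _ h2 _ => exact h2.2.2

lemma mkCl (K : Ctx G t h γ κ) (w : V → ℝ) (x : V) (hx : Om G t h κ w x)
    (claim : ∀ s z, Om G t h κ w s → Relation.ReflTransGen (Rel G t h κ w) s z →
      G.dist s z ≤ h ∧ ∀ u ∈ Nf G s z, Om G t h κ w u) :
    Cl G {z | Relation.ReflTransGen (Rel G t h κ w) x z} γ h := by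
  have hsym : ∀ p q, Relation.ReflTransGen (Rel G t h κ w) p q →
      Relation.ReflTransGen (Rel G t h κ w) q p := by
    intro p q hpq
    induction hpq with
    | refl => exact Relation.ReflTransGen.refl
    | tail _ h2 ih => exact Relation.ReflTransGen.head ⟨h2.1.symm, h2.2.2, h2.2.1⟩ ih
  refine ⟨?_, ?_, ?_⟩
  · intro u v s hu hv ha hd
    have ho := Rel_om hx hu
    have h1 := (claim u v ho ((hsym _ _ hu).trans hv)).2 s (mem_Nf.mpr ⟨ha, hd⟩)
    exact Relation.ReflTransGen.tail hu ⟨ha, ho, h1⟩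
  · intro u hu
    obtain ⟨y, hy⟩ := Rel_om hx hu
    have : {v | v ∈ {z | Relation.ReflTransGen (Rel G t h κ w) x z} ∧ G.Adj u v} =
        (Nf G u y : Set V) := by
      ext v
      constructor
      · rintro ⟨h1, h2⟩
        exact (K.nbr_iff hy h2).mp (Rel_om hx h1)
      · intro hv
        have ha := (mem_Nf.mp hv).1
        exact ⟨Relation.ReflTransGen.tail hu ⟨ha, ⟨y, hy⟩, K.nbr hy hv⟩, ha⟩
    rw [this, Set.ncard_coe_finset, K.hN u y hy.1]
  · intro u v hu hv
    exact (claim u v (Rel_om hx hu) ((hsym _ _ hu).trans hv)).1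

variable {b : ℝ} {c2 c3 a2 a3 : ℕ}

lemma mem_Cf2 {x y s : V} (h : G.dist x y = 2) : s ∈ Cf G x y ↔ G.Adj x s ∧ G.Adj s y := by
  rw [mem_Cf, h]
  constructor
  · rintro ⟨h1, h2⟩; exact ⟨h1, adj_of (by omega)⟩
  · rintro ⟨h1, h2⟩; exact ⟨h1, by rw [adj1 h2]⟩

lemma key_contra (H : Dat G b c2 c3 a2 a3) {u v v' : V} (T : V → Prop) (huv' : G.dist u v' = 2)
    (hTv : T v)
    (hT : ∀ p, T p → G.dist u p = 2 ∧ G.dist p v' = 2 ∧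
      ∀ s, G.Adj p s → G.Adj s v' → G.Adj s u)
    (hp : ∀ g y2, G.Adj u g → G.dist g v = 2 → G.Adj g y2 → G.Adj y2 v → G.dist u y2 = 2 → T y2) :
    False := by
  have e : ∀ p, T p → ∀ s, G.Adj p s → G.Adj s u → G.Adj s v' := by
    intro p hTp s h1 h2
    obtain ⟨q1, q2, q3⟩ := hT p hTp
    have q1' : G.dist p u = 2 := by rw [dcomm, q1]
    have hsub : Cf G p v' ⊆ Cf G p u := by
      intro s hs
      rw [mem_Cf2 q2] at hs
      rw [mem_Cf2 q1']
      exact ⟨hs.1, q3 s hs.1 hs.2⟩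
    have heq := Finset.eq_of_subset_of_card_le hsub (by rw [H.C2 p u q1', H.C2 p v' q2])
    have : s ∈ Cf G p v' := by rw [heq, mem_Cf2 q1']; exact ⟨h1, h2⟩
    exact ((mem_Cf2 q2).mp this).2
  have huv := (hT v hTv).1
  have hsub : Nf G u v ⊆ Cf G u v' := by
    intro g hg
    rw [mem_Nf, huv] at hg
    rw [mem_Cf2 huv']
    refine ⟨hg.1, ?_⟩
    have h1 := dist_ge_pred H.conn hg.1 v
    rcases Nat.lt_or_ge (G.dist g v) 2 with h2 | h2
    · exact e v hTv g (adj_of (by omega)).symm hg.1.symm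
    · obtain ⟨y2, g1, g2⟩ := exists_closer H.conn (show G.dist g v = 1 + 1 by omega)
      have g2 := adj_of g2
      have h3 : G.dist u y2 = 2 := by
        apply d2_of H.conn H.tf hg.1.symm g1
        rintro rfl
        rw [adj1 g2] at huv
        omega
      exact e y2 (hp g y2 hg.1 (by omega) g1 g2 h3) g g1.symm hg.1.symm
  have := Finset.card_le_card hsub
  rw [H.C2 u v' huv', H.ctx2.hN u v huv] at this
  have := H.a2pos
  omega

local notation "t₀" => fun (i : ℕ) => b⁻¹ ^ i

lemma E1 (H : Dat G b c2 c3 a2 a3) {s z z' : V} (hs : Om G t₀ 2 (a2 / (1 + b)) w s)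
    (hz : Om G t₀ 2 (a2 / (1 + b)) w z) (hz' : Om G t₀ 2 (a2 / (1 + b)) w z')
    (h1 : G.Adj s z) (h2 : G.Adj z z') (h3 : G.dist s z' = 2) :
    WP G t₀ 2 (a2 / (1 + b)) w s z' := by
  have K := H.ctx2
  by_contra hcon
  have aux : ∀ y, WP G t₀ 2 (a2 / (1 + b)) w s y → G.dist z' y ≤ 2 → G.dist z' y = 2 := by
    intro y hy hle
    by_contra hne
    rcases Nat.lt_or_ge (G.dist z' y) 1 with h | h
    · have : z' = y := H.conn.dist_eq_zero_iff.mp (by omega)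
      subst this
      exact hcon hy
    · exact hcon (K.right hy (adj_of (by omega : G.dist z' y = 1)).symm h3)
  have st1 : ∀ y, WP G t₀ 2 (a2 / (1 + b)) w s y → G.dist z y = 2 →
      WP G t₀ 2 (a2 / (1 + b)) w z' y := by
    intro y hy hd
    have g1 := K.left hy h1 hd
    exact K.left g1 h2 (aux y hy (K.om_dist g1 h2 hz'))
  have st2 : ∀ y, WP G t₀ 2 (a2 / (1 + b)) w s y → WP G t₀ 2 (a2 / (1 + b)) w z' y := by
    intro y hy
    have g0 := K.om_dist hy h1 hz
    have g1 := dist_ge_pred H.conn h1 y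
    rw [hy.1] at g1
    rcases Nat.lt_or_ge (G.dist z y) 2 with h | h
    · obtain ⟨y', a1, a2, a3⟩ := K.mv s y z hy.1 h1 (by omega)
      have g2 := K.right hy a1 a2
      have g3 := st1 y' g2 a3
      have g4 : Om G t₀ 2 (_ / (1 + b)) w y := ⟨s, K.symm hy⟩
      have g5 := K.om_dist (K.symm g3) a1.symm g4
      rw [dcomm] at g5
      exact K.right g3 a1.symm (aux y hy g5)
    · exact st1 y hy (by omega)
  obtain ⟨y0, hy0⟩ := hs
  refine key_contra H (u := s) (v := y0) (v' := z')
    (fun p => WP G t₀ 2 (a2 / (1 + b)) w s p) h3 hy0 ?_ ?_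
  · intro p hp
    have hp' := st2 p hp
    refine ⟨hp.1, by rw [dcomm]; exact hp'.1, ?_⟩
    intro q hq1 hq2
    have g1 : q ∈ Nf G p z' := mem_Nf.mpr ⟨hq1, by rw [adj1 hq2, dcomm, hp'.1]; norm_num⟩
    have g2 := K.om_dist (K.symm hp) hq1 (K.nbr (K.symm hp') g1)
    have g3 := dist_ge_pred H.conn hq1 s
    rw [dcomm p s, hp.1] at g3
    have g4 : G.dist q s ≠ 2 := by
      intro g4
      exact hcon (K.right (K.right hp hq1 (by rw [dcomm, g4])) hq2 h3)
    exact adj_of (by omega)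
  · intro g y2 _ _ _ q4 q5
    exact K.right hy0 q4.symm q5

lemma reach2 (H : Dat G b c2 c3 a2 a3) {s z : V} (hs : Om G t₀ 2 (a2 / (1 + b)) w s)
    (hr : Relation.ReflTransGen (Rel G t₀ 2 (a2 / (1 + b)) w) s z) :
    G.dist s z ≤ 2 ∧ (G.dist s z = 2 → WP G t₀ 2 (a2 / (1 + b)) w s z) := by
  have K := H.ctx2
  induction hr with
  | refl => simp
  | @tail z z' _ h2 ih =>
    obtain ⟨ha, hz, hz'⟩ := h2
    have g1 := dist_le_succ H.conn ha s
    rw [dcomm z', dcomm z] at g1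
    rcases Nat.lt_or_ge (G.dist s z) 2 with h | h
    · refine ⟨by omega, fun h3 => ?_⟩
      exact E1 H hs hz hz' (adj_of (by omega)) ha h3
    · have h4 := ih.2 (by omega)
      have h5 := K.om_dist (K.symm h4) ha hz'
      rw [dcomm] at h5
      exact ⟨h5, fun h3 => K.right h4 ha h3⟩

theorem exists_cl2 (H : Dat G b c2 c3 a2 a3) {x y : V} (hxy : G.dist x y = 2) :
    ∃ Ω : Set V, x ∈ Ω ∧ y ∈ Ω ∧ Cl G Ω (c2 + a2) 2 := by
  have K := H.ctx2
  set w := Wf G t₀ (a2 / (1 + b)) x y with hw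
  have hwp : WP G t₀ 2 (a2 / (1 + b)) w x y := ⟨hxy, hw.symm⟩
  refine ⟨_, ?_, ?_, mkCl K w x ⟨y, hwp⟩ ?_⟩
  · exact Relation.ReflTransGen.refl
  · obtain ⟨s, h1, h2⟩ := exists_closer H.conn hxy
    have ho := K.nbr hwp (mem_Nf.mpr ⟨h1, by omega⟩)
    exact (Relation.ReflTransGen.single ⟨h1, ⟨y, hwp⟩, ho⟩).tail
      ⟨adj_of h2, ho, ⟨x, K.symm hwp⟩⟩
  · intro s z hs hr
    obtain ⟨g1, g2⟩ := reach2 H hs hr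
    refine ⟨g1, fun u hu => ?_⟩
    have hu' := mem_Nf.mp hu
    rcases Nat.lt_or_ge (G.dist s z) 2 with h | h
    · have : u = z := by
        by_contra hne
        have p1 := H.conn.pos_dist_of_ne hne
        have p2 : G.dist s z = 1 := by omega
        have p3 : G.dist u z = 1 := by omega
        exact H.tf s u z hu'.1 (adj_of p3) (adj_of p2)
      subst this
      exact Rel_om hs hr
    · exact K.nbr (g2 (by omega)) hu

lemma F1 (H : Dat G b c2 c3 a2 a3) {Sg : Set V} {γ' : ℕ} (hC : Cl G Sg γ' 2) (S : V → Prop)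
    {u v v' : V} (hu : u ∈ Sg) (hv : v ∈ Sg) (hv' : v' ∈ Sg) (huv : G.dist u v = 2)
    (huv' : G.dist u v' = 2) (hS : S v)
    (hp : ∀ p q, p ∈ Sg → q ∈ Sg → G.dist u p = 2 → G.dist u q = 2 → G.Adj p q → S p → S q) :
    S v' := by
  by_contra hcon
  refine key_contra H (u := u) (v := v) (v' := v') (fun p => p ∈ Sg ∧ G.dist u p = 2 ∧ S p)
    huv' ⟨hv, huv, hS⟩ ?_ ?_
  · rintro p ⟨p1, p2, p3⟩
    have hd : G.dist p v' = 2 := by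
      have h1 := hC.diam p v' p1 hv'
      by_contra hne
      rcases Nat.lt_or_ge (G.dist p v') 1 with h | h
      · have : p = v' := H.conn.dist_eq_zero_iff.mp (by omega)
        subst this
        exact hcon p3
      · exact hcon (hp p v' p1 hv' p2 huv' (adj_of (by omega)) p3)
    refine ⟨p2, hd, ?_⟩
    intro s s1 s2
    have hs : s ∈ Sg := hC.closed p v' s p1 hv' s1 (by rw [adj1 s2, hd]; norm_num)
    have g1 := hC.diam s u hs hu
    have g2 := dist_ge_pred H.conn s1 u
    rw [dcomm p u, p2] at g2
    have g3 : G.dist s u ≠ 2 := by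
      intro g3
      rw [dcomm] at g3
      exact hcon (hp s v' hs hv' g3 huv' s2 (hp p s p1 hs p2 g3 s1 p3))
    exact adj_of (by omega)
  · intro g y2 q1 q2 q3 q4 q5
    have hg : g ∈ Sg := hC.closed u v g hu hv q1 (by omega)
    have hy : y2 ∈ Sg := hC.closed g v y2 hg hv q3 (by rw [adj1 q4, q2]; norm_num)
    exact ⟨hy, q5, hp v y2 hv hy huv q5 q4.symm hS⟩

end Wfr
end TB
end

section
namespace TB

section H3
set_option linter.unusedSectionVars false
variable {V : Type*} [Fintype V] {G : SimpleGraph V}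
variable {t : ℕ → ℝ} {γ : ℕ} {κ : ℝ} {w : V → ℝ}
variable {b : ℝ} {c2 c3 a2 a3 : ℕ}

lemma F2 (hc : G.Connected) {Sg : Set V} {γ' : ℕ} (hC : Cl G Sg γ' 2) {v z y : V} (hv : v ∈ Sg)
    (hz : z ∉ Sg) (hvz : G.Adj v z) (hy : y ∈ Sg) (hvy : G.dist v y = 2) : G.dist z y = 3 := by
  have h1 := dist_le_succ hc hvz y
  by_contra hne
  exact hz (hC.closed v y z hv hy hvz (by omega))

lemma not_mem_of {Sg : Set V} {γ' : ℕ} (hC : Cl G Sg γ' 2) {s z : V} (hs : s ∈ Sg)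
    (h : G.dist s z = 3) : z ∉ Sg := by
  intro hz
  have := hC.diam s z hs hz
  omega

lemma LH (H : Dat G b c2 c3 a2 a3) (K : Ctx G t 3 γ κ) {Sg : Set V} {γ' : ℕ} (hC : Cl G Sg γ' 2)
    {s z q σ : V} (hw : WP G t 3 κ w s z) (hzq : G.Adj z q) (hs : s ∈ Sg) (hq : q ∈ Sg)
    (hsq : G.dist s q = 2) (hσ : σ ∈ Sg) (hqσ : G.dist q σ = 2) : WP G t 3 κ w σ z := by
  have hz := not_mem_of hC hs hw.1
  refine F1 H hC (fun p => WP G t 3 κ w p z) hq hs hσ (by rw [dcomm, hsq]) hqσ hw ?_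
  intro p p' hp hp' h1 h2 h3 h4
  refine K.left h4 h3 ?_
  rw [dcomm]
  exact F2 H.conn hC hq hz hzq.symm hp' h2

lemma LX (H : Dat G b c2 c3 a2 a3) (K : Ctx G t 3 γ κ) {Sg S2 : Set V} {γ' γ2 : ℕ}
    (hC : Cl G Sg γ' 2) (hC2 : Cl G S2 γ2 2)
    {s z q q' z' : V} (hw : WP G t 3 κ w s z) (hzq : G.Adj z q) (hs : s ∈ Sg) (hq : q ∈ Sg)
    (hsq : G.dist s q = 2) (hqq' : G.Adj q q') (hq' : q' ∈ Sg) (hq2 : q' ∈ S2) (hz2 : z ∈ S2)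
    (hz'2 : z' ∈ S2) (hqz' : G.Adj q z') (hne : z' ≠ q') : WP G t 3 κ w s z' := by
  have hz := not_mem_of hC hs hw.1
  have hne0 : 0 < G.dist q' s := by
    apply H.conn.pos_dist_of_ne
    rintro rfl
    rw [dcomm, adj1 hqq'] at hsq
    omega
  obtain ⟨n, hn⟩ : ∃ n, G.dist q' s = n + 1 := ⟨G.dist q' s - 1, by omega⟩
  obtain ⟨σ, h1, h2⟩ := exists_closer H.conn hn
  have hσ : σ ∈ Sg := hC.closed q' s σ hq' hs h1 (by omega)
  have h3 : G.dist q σ = 2 := by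
    apply d2_of H.conn H.tf hqq'.symm h1
    rintro rfl
    have := hC.diam q' s hq' hs
    rw [dcomm] at h2
    omega
  have g1 := LH H K hC hw hzq hs hq hsq hσ h3
  have hσ2 : σ ∉ S2 := not_mem_of hC2 hz2 (by rw [dcomm]; exact g1.1)
  have e1 : G.dist q' z = 2 := by
    apply d2_of H.conn H.tf hqq' hzq.symm
    rintro rfl
    exact hz hq'
  have e2 : G.dist q' z' = 2 := d2_of H.conn H.tf hqq' hqz' hne.symm
  have g2 : WP G t 3 κ w σ z' := by
    refine F1 H hC2 (fun p => WP G t 3 κ w σ p) hq2 hz2 hz'2 e1 e2 g1 ?_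
    intro p p' hp hp' i1 i2 i3 i4
    exact K.right i4 i3 (F2 H.conn hC2 hq2 hσ2 h1 hp' i2)
  exact LH H K hC g2 hqz'.symm hσ hq (by rw [dcomm, h3]) hs (by rw [dcomm, hsq])

def Good (G : SimpleGraph V) (t : ℕ → ℝ) (κ : ℝ) (w : V → ℝ) (s q : V) : Prop :=
  G.dist s q = 2 ∧ ∃ y, WP G t 3 κ w s y ∧ G.Adj q y

lemma Good.symm (K : Ctx G t 3 γ κ) {s q : V} (hg : Good G t κ w s q) : Good G t κ w q s := by
  obtain ⟨h1, y, h2, h3⟩ := hg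
  obtain ⟨s', a1, a2, a3⟩ := K.mv y s q (K.symm h2).1 h3.symm (by rw [dcomm, h1])
  exact ⟨by rw [dcomm, h1], s', K.left (K.right (K.symm h2) a1 a2) h3.symm a3, a1⟩

lemma Good.nf (K : Ctx G t 3 γ κ) {s q u : V} (hg : Good G t κ w s q) (hu : u ∈ Nf G s q) :
    Om G t 3 κ w u := by
  obtain ⟨h1, y, h2, h3⟩ := hg
  rw [mem_Nf] at hu
  apply K.nbr h2
  rw [mem_Nf]
  refine ⟨hu.1, ?_⟩
  have := dist_le_succ K.conn h3 u
  rw [dcomm y, dcomm q] at this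
  rw [h2.1]
  omega

lemma sum_two (S : Finset V) (f : V → ℝ) (P : V → Prop) [DecidablePred P] (A B : ℝ)
    (h1 : ∀ v ∈ S, P v → f v = A) (h2 : ∀ v ∈ S, ¬ P v → f v = B) :
    ∑ v ∈ S, f v = S.card * B + (S.filter P).card * (A - B) := by
  have : ∀ v ∈ S, f v = B + if P v then A - B else 0 := by
    intro v hv
    by_cases h : P v
    · rw [if_pos h, h1 v hv h]; ring
    · rw [if_neg h, h2 v hv h, add_zero]
  rw [Finset.sum_congr rfl this, Finset.sum_add_distrib, Finset.sum_const, ← Finset.sum_filter,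
    Finset.sum_const, nsmul_eq_mul, nsmul_eq_mul]

lemma NB (H : Dat G b c2 c3 a2 a3) (K : Ctx G t 3 γ κ) {s q z' : V} (hg : Good G t κ w s q)
    (hz' : Om G t 3 κ w z') (hqz : G.Adj q z') (hsz : G.dist s z' = 3) : WP G t 3 κ w s z' := by
  classical
  obtain ⟨hsq, y, hw, hqy⟩ := hg
  by_contra hcon
  obtain ⟨Sg, hs, hq, hC⟩ := exists_cl2 H hsq
  have hzn := not_mem_of hC hs hsz
  have hyn := not_mem_of hC hs hw.1
  have hne : y ≠ z' := by rintro rfl; exact hcon hw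
  have hyz : G.dist y z' = 2 := d2_of H.conn H.tf hqy hqz hne
  -- step 1
  have s1 : ∀ v ∈ Af G s y, G.dist v q = 2 → G.dist z' v = 3 := by
    intro v hv h1
    rw [mem_Af] at hv
    have hvS : v ∈ Sg := hC.closed s q v hs hq hv.1 (by omega)
    exact F2 H.conn hC hq hzn hqz hvS (by rw [dcomm, h1])
  have s2 : ∀ v ∈ Af G s y, ¬ G.dist v q = 2 → G.dist z' v = 2 := by
    intro v hv h1
    rw [mem_Af, hw.1] at hv
    have e1 := dist_le_succ H.conn hv.1 q
    have e2 := dist_ge_pred H.conn hqy v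
    rw [dcomm q, dcomm y] at e2
    have e3 := dist_le_succ H.conn hqy v
    rw [dcomm q, dcomm y] at e3
    have e4 : G.dist v q = 3 := by omega
    have f1 : WP G t 3 κ w q v := K.left (K.symm (K.left hw hv.1 hv.2)) hqy.symm (by rw [dcomm, e4])
    have f2 := K.om_dist f1 hqz hz'
    have f3 : G.dist z' v ≠ 3 := by
      intro f3
      exact hcon (K.symm (K.right (K.left f1 hqz f3) hv.1.symm (by rw [dcomm, hsz])))
    have f4 := dist_ge_pred H.conn hv.1 z'
    rw [dcomm v] at f4
    omega
  have s3 : (Af G s y).filter (fun v => G.dist v q = 2) = Af G s q := by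
    ext v
    rw [Finset.mem_filter, mem_Af, mem_Af, hsq, hw.1]
    constructor
    · rintro ⟨⟨h1, _⟩, h2⟩; exact ⟨h1, h2⟩
    · rintro ⟨h1, h2⟩
      have hvS : v ∈ Sg := hC.closed s q v hs hq h1 (by omega)
      have := F2 H.conn hC hq hyn hqy hvS (by rw [dcomm, h2])
      exact ⟨⟨h1, by rw [dcomm, this]⟩, h2⟩
  have t1 := sum_two (Af G s y) (fun v => b⁻¹ ^ G.dist z' v) (fun v => G.dist v q = 2)
    (b⁻¹ ^ 3) (b⁻¹ ^ 2) (fun v h1 h2 => by rw [s1 v h1 h2]) (fun v h1 h2 => by rw [s2 v h1 h2])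
  rw [s3, H.A2 s q hsq, H.A3 s y hw.1] at t1
  have hys : G.dist y s = 3 := by rw [dcomm, hw.1]
  have s4 : ∀ v ∈ Af G y s, ¬ G.dist v z' = 2 → G.dist z' v = 3 := by
    intro v hv h1
    rw [mem_Af, hys] at hv
    have e1 := dist_le_succ H.conn hv.1 z'
    have e2 := dist_ge_pred H.conn hv.1 z'
    rw [hyz] at e1 e2
    have e3 : G.dist v z' ≠ 1 := by
      intro e3
      exact hcon (K.right (K.right hw hv.1 (by rw [dcomm, hv.2])) (adj_of e3) hsz)
    rw [dcomm]
    omega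
  have t2 := sum_two (Af G y s) (fun v => b⁻¹ ^ G.dist z' v) (fun v => G.dist v z' = 2)
    (b⁻¹ ^ 2) (b⁻¹ ^ 3) (fun v h1 h2 => by rw [dcomm, h2]) (fun v h1 h2 => by rw [s4 v h1 h2])
  rw [H.A3 y s hys] at t2
  set N := (Af G y s).filter (fun v => G.dist v z' = 2) with hN
  have hNs : N ⊆ Af G y z' := by
    intro v hv
    rw [hN, Finset.mem_filter, mem_Af] at hv
    rw [mem_Af, hyz]
    exact ⟨hv.1.1, hv.2⟩
  have hNc := Finset.card_le_card hNs
  rw [H.A2 y z' hyz] at hNc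
  have hNr : (N.card : ℝ) ≤ a2 := by exact_mod_cast hNc
  have bal := H.bal3A z' s y hw.1
  rw [t1, t2, dcomm z' s, dcomm z' y, hsz, hyz] at bal
  obtain ⟨q0, q1, q2, q3⟩ := H.hq
  have hb := H.hb
  have hap : (0 : ℝ) < a2 := by exact_mod_cast H.a2pos
  have hNe : (N.card : ℝ) = a2 * (1 + b) ^ 2 := by
    have hd : b⁻¹ ^ 2 * (1 - b⁻¹) ≠ 0 :=
      mul_ne_zero (pow_ne_zero _ q0) (sub_ne_zero.mpr q1.symm)
    have ea3 := H.ea3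
    apply mul_right_cancel₀ hd
    linear_combination (-1) * bal + (b⁻¹ ^ 2 * (1 - b⁻¹)) * ea3
  have hb2 : b = -2 := by
    have : (1 + b) ^ 2 ≤ 1 := by
      by_contra h
      push Not at h
      nlinarith
    nlinarith
  subst hb2
  have hNN : N = Af G y z' := by
    apply Finset.eq_of_subset_of_card_le hNs
    rw [H.A2 y z' hyz]
    have : (N.card : ℝ) = a2 := by rw [hNe]; ring
    exact le_of_eq (by exact_mod_cast this.symm)
  have ea2 := H.ea2
  -- step 4
  obtain ⟨Δ, hyD, hzD, hD⟩ := exists_cl2 H hyz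
  have hqD : q ∈ Δ := hD.closed y z' q hyD hzD hqy.symm (by rw [adj1 hqz, hyz]; norm_num)
  have hsD : s ∉ Δ := not_mem_of hD hyD hys
  have s5 : ∀ g ∈ Δ, G.Adj q g → G.dist s g = 3 := by
    intro g hgD hqg
    have e1 := dist_le_succ H.conn hqg s
    have e2 := dist_ge_pred H.conn hqg s
    rw [dcomm g, dcomm q, hsq] at e1 e2
    by_contra hn3
    have hgz : g ≠ z' := by rintro rfl; exact hn3 hsz
    have hgy : g ≠ y := by rintro rfl; exact hn3 hw.1
    rcases Nat.lt_or_ge (G.dist s g) 2 with h | h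
    · have hsg := adj_of (show G.dist s g = 1 by omega)
      refine hcon (F1 H hD (fun p => WP G t 3 κ w s p) hgD hyD hzD
        (d2_of H.conn H.tf hqg hqy hgy) (d2_of H.conn H.tf hqg hqz hgz) hw ?_)
      intro p p' hp hp' i1 i2 i3 i4
      exact K.right i4 i3 (F2 H.conn hD hgD hsD hsg.symm hp' i2)
    · have hgS : g ∈ Sg := hC.closed q s g hq hs hqg (by rw [dcomm, dcomm q]; omega)
      exact hcon (LX H K hC hD hw hqy.symm hs hq hsq hqg hgS hgD hyD hzD hqz hgz.symm)
  have K2 := H.ctx2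
  obtain ⟨o, o1, o2, o3⟩ := K2.mv y z' q hyz hqy.symm (by rw [adj1 hqz])
  have hoD : o ∈ Δ := hD.closed z' y o hzD hyD o1 (by rw [dcomm, o2, dcomm, hyz])
  have hW : WP G (fun i => (-2 : ℝ)⁻¹ ^ i) 2 (a2 / (1 + -2)) (Wf G (fun i => (-2 : ℝ)⁻¹ ^ i) (a2 / (1 + -2)) y o) y o :=
    ⟨o2, rfl⟩
  have hW2 := congrFun (K2.left hW hqy.symm o3).2 s
  simp only [Wf] at hW2
  rw [← K2.E y z' o hyz o2 o1, Nf_sum H.conn y z', hsq, hw.1] at hW2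
  have r1 : ∀ v ∈ Nf G q o, ((-2 : ℝ)⁻¹) ^ G.dist s v = (-2 : ℝ)⁻¹ ^ 3 := by
    intro v hv
    rw [mem_Nf] at hv
    rw [s5 v (hD.closed q o v hqD hoD hv.1 hv.2) hv.1]
  have r2 : ∀ v ∈ Af G y z', ((-2 : ℝ)⁻¹) ^ G.dist s v = (-2 : ℝ)⁻¹ ^ 3 := by
    intro v hv
    rw [← hNN, hN, Finset.mem_filter, mem_Af] at hv
    rw [dcomm, hv.1.2, hys]
  have r3 : ∀ v ∈ Cf G y z', ((-2 : ℝ)⁻¹) ^ G.dist s v ≤ (-2 : ℝ)⁻¹ ^ 2 := by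
    intro v hv
    rw [mem_Cf] at hv
    have e1 := dist_le_succ H.conn hv.1 s
    have e2 := dist_ge_pred H.conn hv.1 s
    rw [hys, dcomm v] at e1 e2
    have : G.dist s v = 2 ∨ G.dist s v = 3 ∨ G.dist s v = 4 := by omega
    rcases this with h | h | h <;> rw [h] <;> norm_num
  have r4 := Finset.sum_le_card_nsmul _ _ _ r3
  rw [Finset.sum_congr rfl r1, Finset.sum_congr rfl r2] at hW2
  simp only [Finset.sum_const, nsmul_eq_mul, K2.hN q o o3, H.A2 y z' hyz, H.C2 y z' hyz] at hW2 r4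
  push_cast at hW2
  norm_num at hW2 r4 ea2
  linarith

lemma Good.step (H : Dat G b c2 c3 a2 a3) (K : Ctx G t 3 γ κ) {Sg : Set V} {γ' : ℕ}
    (hC : Cl G Sg γ' 2) {s q q' : V} (hs : s ∈ Sg) (hq : q ∈ Sg) (hg : Good G t κ w s q)
    (hq' : q' ∈ Sg) (h2 : G.dist s q' = 2) : Good G t κ w s q' := by
  obtain ⟨h1, s', h3, h4⟩ := hg.symm K
  have := LH H K hC h3 h4.symm hq hs h1 hq' h2
  exact Good.symm K ⟨by rw [dcomm, h2], s', this, h4⟩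

lemma Good.adjstep (H : Dat G b c2 c3 a2 a3) (K : Ctx G t 3 γ κ) {Sg : Set V} {γ' : ℕ}
    (hC : Cl G Sg γ' 2) {p p' r : V} (hp : p ∈ Sg) (hp' : p' ∈ Sg) (hg : Good G t κ w p p')
    (hr : r ∈ Sg) (ha : G.Adj p r) : ∃ v ∈ Sg, Good G t κ w r v := by
  have e1 := dist_ge_pred H.conn ha p'
  have e2 := hC.diam r p' hr hp'
  rw [hg.1] at e1
  obtain ⟨v, hv, v1, v2⟩ : ∃ v ∈ Sg, G.dist p v = 2 ∧ G.dist r v = 2 := by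
    rcases Nat.lt_or_ge (G.dist r p') 2 with h | h
    · obtain ⟨v, o1, o2, o3⟩ := H.ctx2.mv p p' r hg.1 ha (by omega)
      exact ⟨v, hC.closed p' p v hp' hp o1 (by rw [dcomm, o2, dcomm, hg.1]), o2, o3⟩
    · exact ⟨p', hp', hg.1, by omega⟩
  have g1 := Good.symm K (Good.step H K hC hp hp' hg hv v1)
  exact ⟨v, hv, Good.symm K (Good.step H K hC hv hp g1 hr (by rw [dcomm, v2]))⟩

lemma Good.all (H : Dat G b c2 c3 a2 a3) (K : Ctx G t 3 γ κ) {Sg : Set V} {γ' : ℕ}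
    (hC : Cl G Sg γ' 2) {s q : V} (hs : s ∈ Sg) (hq : q ∈ Sg) (hg : Good G t κ w s q) :
    ∀ p p' : V, p ∈ Sg → p' ∈ Sg → G.dist p p' = 2 → Good G t κ w p p' := by
  intro p p' hp hp' hpp
  have e := hC.diam s p hs hp
  obtain ⟨v, hv, gv⟩ : ∃ v ∈ Sg, Good G t κ w p v := by
    have : G.dist s p = 0 ∨ G.dist s p = 1 ∨ G.dist s p = 2 := by omega
    rcases this with h | h | h
    · have : s = p := H.conn.dist_eq_zero_iff.mp h
      subst this
      exact ⟨q, hq, hg⟩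
    · exact Good.adjstep H K hC hs hq hg hp (adj_of h)
    · exact ⟨s, hs, Good.symm K (Good.step H K hC hs hq hg hp h)⟩
  exact Good.step H K hC hp hv gv hp' hpp

lemma LL (H : Dat G b c2 c3 a2 a3) (K : Ctx G t 3 γ κ) {Sg : Set V}
    (hC : Cl G Sg (c2 + a2) 2)
    (hA : ∀ p p' : V, p ∈ Sg → p' ∈ Sg → G.dist p p' = 2 → Good G t κ w p p')
    {p s z : V} (hp : p ∈ Sg) (hs : s ∈ Sg) (hps : G.Adj p s) (hpz : G.Adj p z)
    (hz : Om G t 3 κ w z) (hne : z ≠ s) : Good G t κ w s z := by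
  have hsz : G.dist s z = 2 := d2_of H.conn H.tf hps hpz hne.symm
  by_cases hzS : z ∈ Sg
  · exact hA s z hs hzS hsz
  have hcard := hC.reg s hs
  have h1 : 1 < {v | v ∈ Sg ∧ G.Adj s v}.ncard := by
    rw [hcard]
    have := H.a2pos
    have := H.c2pos
    omega
  obtain ⟨σ, ⟨hσ, hsσ⟩, hσp⟩ := Set.exists_ne_of_one_lt_ncard h1 p
  have h2 : G.dist p σ = 2 := d2_of H.conn H.tf hps.symm hsσ hσp.symm
  have h3 : G.dist σ p = 2 := by rw [dcomm, h2]
  have h4 := NB H K (hA σ p hσ hp h3) hz hpz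
    (by rw [dcomm]; exact F2 H.conn hC hp hzS hpz hσ h2)
  exact Good.symm K ⟨by rw [dcomm, hsz], σ, K.symm h4, hsσ⟩

lemma LM (H : Dat G b c2 c3 a2 a3) (K : Ctx G t 3 γ κ) {p s z : V} (hp : Om G t 3 κ w p)
    (hs : Om G t 3 κ w s) (hz : Om G t 3 κ w z) (hps : G.Adj p s) (hpz : G.Adj p z)
    (hne : s ≠ z) : Good G t κ w s z := by
  obtain ⟨y, hy⟩ := hp
  obtain ⟨q, h1, h2⟩ := exists_closer H.conn (show G.dist y p = 2 + 1 from (K.symm hy).1)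
  have hg : Good G t κ w p q := ⟨by rw [dcomm, h2], y, hy, h1.symm⟩
  obtain ⟨Sg, hpS, hqS, hC⟩ := exists_cl2 H hg.1
  have hA := Good.all H K hC hpS hqS hg
  by_cases hsS : s ∈ Sg
  · exact LL H K hC hA hpS hsS hps hpz hz hne.symm
  obtain ⟨s0, i1, i2⟩ := exists_closer H.conn hg.1
  have hs0 : s0 ∈ Sg := hC.closed p q s0 hpS hqS i1 (by rw [i2, hg.1]; norm_num)
  have g0 : Good G t κ w s0 s := LL H K hC hA hpS hs0 i1 hps hs (by rintro rfl; exact hsS hs0)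
  obtain ⟨S2, j1, j2, hC2⟩ := exists_cl2 H g0.1
  have hA2 := Good.all H K hC2 j1 j2 g0
  have hpS2 : p ∈ S2 := hC2.closed s0 s p j1 j2 i1.symm (by rw [adj1 hps, g0.1]; norm_num)
  exact LL H K hC2 hA2 hpS2 j2 hps hpz hz hne.symm

lemma reach3 (H : Dat G b c2 c3 a2 a3) (K : Ctx G t 3 γ κ) {s z : V} (hs : Om G t 3 κ w s)
    (hr : Relation.ReflTransGen (Rel G t 3 κ w) s z) :
    G.dist s z ≤ 3 ∧ (G.dist s z = 2 → Good G t κ w s z) ∧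
      (G.dist s z = 3 → WP G t 3 κ w s z) := by
  induction hr with
  | refl => simp
  | @tail z z' _ h2 ih =>
    obtain ⟨ha, hz, hz'⟩ := h2
    obtain ⟨i1, i2, i3⟩ := ih
    have g1 := dist_le_succ H.conn ha s
    have g2 := dist_ge_pred H.conn ha s
    rw [dcomm z', dcomm z] at g1 g2
    have : G.dist s z = 0 ∨ G.dist s z = 1 ∨ G.dist s z = 2 ∨ G.dist s z = 3 := by omega
    rcases this with h | h | h | h
    · exact ⟨by omega, by omega, by omega⟩
    · refine ⟨by omega, fun h3 => ?_, by omega⟩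
      refine LM H K hz hs hz' (adj_of h).symm ha ?_
      rintro rfl
      rw [SimpleGraph.dist_self] at h3
      omega
    · have hg := i2 h
      refine ⟨by omega, fun h3 => ?_, fun h3 => NB H K hg hz' ha h3⟩
      obtain ⟨Sg, j1, j2, hC⟩ := exists_cl2 H h
      refine Good.all H K hC j1 j2 hg s z' j1 ?_ h3
      exact hC.closed z s z' j2 j1 ha (by rw [dcomm, h3, dcomm, h])
    · have hw := i3 h
      have := K.om_dist (K.symm hw) ha hz'
      rw [dcomm] at this
      exact ⟨this, fun h3 => ⟨h3, z, hw, ha.symm⟩, fun h3 => K.right hw ha h3⟩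

theorem exists_cl3 (H : Dat G b c2 c3 a2 a3) {x y : V} (hxy : G.dist x y = 3) :
    ∃ Ω : Set V, x ∈ Ω ∧ y ∈ Ω ∧ Cl G Ω (c3 + a3) 3 := by
  have K := H.ctx3
  set w := Wf G (fun i => b⁻¹ ^ i) (a2 * (1 + b) + b * (c2 - b)) x y with hw
  have hwp : WP G (fun i => b⁻¹ ^ i) 3 (a2 * (1 + b) + b * (c2 - b)) w x y := ⟨hxy, hw.symm⟩
  refine ⟨_, ?_, ?_, mkCl K w x ⟨y, hwp⟩ ?_⟩
  · exact Relation.ReflTransGen.refl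
  · obtain ⟨s, h1, h2⟩ := exists_closer H.conn hxy
    obtain ⟨s', h3, h4⟩ := exists_closer H.conn h2
    have h4' := adj_of h4
    have ho := K.nbr hwp (mem_Nf.mpr ⟨h1, by omega⟩)
    have h5 := dist_le_succ H.conn h3 x
    rw [adj1 h1.symm] at h5
    have ho' := K.nbr (K.symm hwp) (mem_Nf.mpr ⟨h4'.symm, by rw [dcomm y, hxy]; omega⟩)
    exact ((Relation.ReflTransGen.single ⟨h1, ⟨y, hwp⟩, ho⟩).tail ⟨h3, ho, ho'⟩).tail
      ⟨h4', ho', ⟨x, K.symm hwp⟩⟩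
  · intro s z hs hr
    obtain ⟨g1, g2, g3⟩ := reach3 H K hs hr
    refine ⟨g1, fun u hu => ?_⟩
    have hu' := mem_Nf.mp hu
    rcases Nat.lt_or_ge (G.dist s z) 2 with h | h
    · have : u = z := by
        by_contra hne
        have p1 := H.conn.pos_dist_of_ne hne
        have p2 : G.dist s z = 1 := by omega
        have p3 : G.dist u z = 1 := by omega
        exact H.tf s u z hu'.1 (adj_of p3) (adj_of p2)
      subst this
      exact Rel_om hs hr
    · rcases Nat.lt_or_ge (G.dist s z) 3 with h' | h'
      · exact (g2 (by omega)).nf K hu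
      · exact K.nbr (g3 (by omega)) hu

end H3
end TB
end

namespace TB

section Fin0
set_option linter.unusedSectionVars false
variable {V : Type*} [Fintype V] {G : SimpleGraph V}

lemma Cl.wgc (hc : G.Connected) {Ω : Set V} {γ m : ℕ} (hC : Cl G Ω γ m) (n : ℕ) :
    ∀ u v w : V, G.dist u v = n → u ∈ Ω → w ∈ Ω →
      G.dist u v + G.dist v w ≤ G.dist u w + 1 → v ∈ Ω := by
  induction n with
  | zero =>
    intro u v w h hu _ _
    rw [← hc.dist_eq_zero_iff.mp h]
    exact hu
  | succ n ih =>
    intro u v w h hu hw hle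
    obtain ⟨s, h1, h2⟩ := exists_closer hc h
    have h3 := hc.dist_triangle (u := s) (v := v) (w := w)
    have h4 := dist_ge_pred hc h1 w
    have hs := hC.closed u w s hu hw h1 (by omega)
    exact ih s v w h2 hs hw (by omega)

lemma Cl.walk (hc : G.Connected) {Ω : Set V} {γ m : ℕ} (hC : Cl G Ω γ m) (n : ℕ) :
    ∀ u v : Ω, G.dist (u : V) v = n → ∃ p : (G.induce Ω).Walk u v, p.length = n := by
  induction n with
  | zero =>
    intro u v h
    have : u = v := Subtype.ext (hc.dist_eq_zero_iff.mp h)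
    subst this
    exact ⟨SimpleGraph.Walk.nil, rfl⟩
  | succ n ih =>
    intro u v h
    obtain ⟨s, h1, h2⟩ := exists_closer hc h
    have hs := hC.closed u v s u.2 v.2 h1 (by omega)
    obtain ⟨p, hp⟩ := ih ⟨s, hs⟩ v h2
    have ha : (G.induce Ω).Adj u ⟨s, hs⟩ := h1
    exact ⟨SimpleGraph.Walk.cons ha p, by rw [SimpleGraph.Walk.length_cons, hp]⟩

lemma Cl.dist_eq (hc : G.Connected) {Ω : Set V} {γ m : ℕ} (hC : Cl G Ω γ m) (u v : Ω) :
    (G.induce Ω).dist u v = G.dist (u : V) v := by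
  obtain ⟨p, hp⟩ := hC.walk hc _ u v rfl
  apply le_antisymm
  · rw [← hp]; exact SimpleGraph.dist_le p
  · obtain ⟨r, hr⟩ := p.reachable.exists_walk_length_eq_dist
    rw [← hr]
    have := SimpleGraph.dist_le (r.map (SimpleGraph.Embedding.induce Ω).toHom)
    rwa [SimpleGraph.Walk.length_map] at this

lemma Cl.fin (hc : G.Connected) {Ω : Set V} {γ : ℕ} {x y : V} (hx : x ∈ Ω) (hy : y ∈ Ω)
    (hC : Cl G Ω γ (G.dist x y)) :
    ∃ Ω : Set V, x ∈ Ω ∧ y ∈ Ω ∧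
        (∃ γ : ℕ, ∀ u ∈ Ω, {w | w ∈ Ω ∧ G.Adj u w}.ncard = γ) ∧
        (∀ u v w : V, u ∈ Ω → w ∈ Ω →
          G.dist u v + G.dist v w ≤ G.dist u w + 1 → v ∈ Ω) ∧
        (∀ u v : Ω, (G.induce Ω).dist u v ≤ G.dist x y) ∧
        (∃ u v : Ω, (G.induce Ω).dist u v = G.dist x y) := by
  refine ⟨Ω, hx, hy, ⟨γ, hC.reg⟩, ?_, ?_, ⟨x, hx⟩, ⟨y, hy⟩, hC.dist_eq hc _ _⟩
  · intro u v w hu hw h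
    exact hC.wgc hc _ u v w rfl hu hw h
  · intro u v
    rw [hC.dist_eq hc]
    exact hC.diam u v u.2 v.2

lemma exists_cl0 (hc : G.Connected) (x : V) : Cl G {x} 0 0 := by
  refine ⟨?_, ?_, ?_⟩
  · rintro u v s rfl rfl h1 h2
    rw [SimpleGraph.dist_self] at h2
    exact hc.dist_eq_zero_iff.mp (by omega)
  · rintro u rfl
    rw [Set.ncard_eq_zero]
    ext v
    simp only [Set.mem_singleton_iff, Set.mem_setOf_eq, Set.mem_empty_iff_false, iff_false]
    rintro ⟨rfl, h⟩
    exact h.ne rfl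
  · rintro u v rfl rfl
    simp

lemma exists_cl1 (hc : G.Connected) (tf : ∀ x y z : V, G.Adj x y → G.Adj y z → ¬ G.Adj x z)
    {x y : V} (hxy : G.Adj x y) : Cl G {x, y} 1 1 := by
  have hd : ∀ u v : V, u ∈ ({x, y} : Set V) → v ∈ ({x, y} : Set V) → u = v ∨ G.Adj u v := by
    rintro u v (rfl | rfl) (rfl | rfl)
    · exact Or.inl rfl
    · exact Or.inr hxy
    · exact Or.inr hxy.symm
    · exact Or.inl rfl
  refine ⟨?_, ?_, ?_⟩
  · intro u v s hu hv h1 h2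
    rcases hd u v hu hv with h | h
    · subst h
      rw [SimpleGraph.dist_self] at h2
      rw [hc.dist_eq_zero_iff.mp (show G.dist s u = 0 by omega)]
      exact hu
    · rw [adj1 h] at h2
      by_cases h3 : s = v
      · rw [h3]; exact hv
      · have := hc.pos_dist_of_ne h3
        exact absurd h (tf u s v h1 (adj_of (by omega)))
  · rintro u (rfl | rfl)
    · rw [Set.ncard_eq_one]
      refine ⟨y, ?_⟩
      ext v
      constructor
      · rintro ⟨rfl | rfl, h⟩
        · exact absurd rfl h.ne
        · rfl
      · rintro rfl
        exact ⟨Or.inr rfl, hxy⟩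
    · rw [Set.ncard_eq_one]
      refine ⟨x, ?_⟩
      ext v
      constructor
      · rintro ⟨rfl | rfl, h⟩
        · rfl
        · exact absurd rfl h.ne
      · rintro rfl
        exact ⟨Or.inl rfl, hxy.symm⟩
  · intro u v hu hv
    rcases hd u v hu hv with h | h
    · subst h; simp
    · rw [adj1 h]

lemma mkDR (hconn : G.Connected) (D : ℕ) (hD : 3 ≤ D)
    (hdiam_le : ∀ x y : V, G.dist x y ≤ D) (hdiam : ∃ x y : V, G.dist x y = D)
    (p : ℕ → ℕ → ℕ → ℕ) (hdr : G.IsDistRegularWith D p)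
    (b α β : ℝ) (hcp : HasClassicalParams D p b α β) :
    DR G D (fun i => p i 1 (i - 1)) (fun i => p i 1 i) (fun i => p i 1 (i + 1)) := by
  obtain ⟨hb0, hb1, hc, hbb⟩ := hcp
  have key : ∀ (x y : V) (j : ℕ) (S : Finset V), j ≤ D →
      (∀ s, s ∈ S ↔ G.Adj x s ∧ G.dist s y = j) → S.card = p (G.dist x y) 1 j := by
    intro x y j S hj hS
    rw [← hdr (G.dist x y) 1 j (hdiam_le x y) (by omega) hj x y rfl, ← Set.ncard_coe_finset]
    congr 1
    ext s
    rw [Finset.mem_coe, hS, Set.mem_setOf_eq, SimpleGraph.dist_eq_one_iff_adj,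
      SimpleGraph.dist_comm]
  refine ⟨hconn, hdiam_le, hdiam, ?_, ?_, ?_⟩
  · intro x y
    by_cases h0 : G.dist x y = 0
    · have h1 := hc 0 (by omega)
      simp only [gaussBracket, Finset.range_zero, Finset.sum_empty, zero_mul,
        Nat.cast_eq_zero] at h1
      simp only [h0, h1]
      rw [Finset.card_eq_zero, Finset.eq_empty_iff_forall_notMem]
      intro s hs
      rw [mem_Cf] at hs
      omega
    · have := hdiam_le x y
      refine key x y _ _ (by omega) fun s => ?_
      rw [mem_Cf]
      constructor <;> rintro ⟨h1, h2⟩ <;> exact ⟨h1, by omega⟩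
  · intro x y
    exact key x y _ _ (hdiam_le x y) fun s => mem_Af
  · intro x y
    by_cases h0 : G.dist x y = D
    · have h1 := hbb D le_rfl
      rw [sub_self, zero_mul, Nat.cast_eq_zero] at h1
      simp only [h0, h1]
      rw [Finset.card_eq_zero, Finset.eq_empty_iff_forall_notMem]
      intro s hs
      rw [mem_Bf] at hs
      have := hdiam_le s y
      omega
    · have := hdiam_le x y
      exact key x y _ _ (by omega) fun s => mem_Bf

end Fin0
end TB

/-- A distance-regular graph with classical parameters `(D, b, α, β)`,
`D ≥ 3`, `a₁ = 0` and `a₂ ≠ 0` is `3`-bounded: for all vertices `x, y` with `∂(x,y) ≤ 3`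
there is a regular weak-geodetically closed (induced) subgraph of diameter `∂(x,y)`
containing `x` and `y`.  (Here `a₁ = p¹₁₁` and `a₂ = p²₁₂`.) -/
theorem three_bounded [Fintype V] (G : SimpleGraph V) (hconn : G.Connected)
    (D : ℕ) (hD : 3 ≤ D)
    (hdiam_le : ∀ x y : V, G.dist x y ≤ D) (hdiam : ∃ x y : V, G.dist x y = D)
    (p : ℕ → ℕ → ℕ → ℕ) (hdr : G.IsDistRegularWith D p)
    (b α β : ℝ) (hcp : HasClassicalParams D p b α β)
    (ha1 : p 1 1 1 = 0) (ha2 : p 2 1 2 ≠ 0) :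
    ∀ x y : V, G.dist x y ≤ 3 →
      ∃ Ω : Set V, x ∈ Ω ∧ y ∈ Ω ∧
        -- the induced subgraph on Ω is regular
        (∃ γ : ℕ, ∀ u ∈ Ω, {w | w ∈ Ω ∧ G.Adj u w}.ncard = γ) ∧
        -- Ω is weak-geodetically closed
        (∀ u v w : V, u ∈ Ω → w ∈ Ω →
          G.dist u v + G.dist v w ≤ G.dist u w + 1 → v ∈ Ω) ∧
        -- the induced subgraph on Ω has diameter ∂(x,y)
        (∀ u v : Ω, (G.induce Ω).dist u v ≤ G.dist x y) ∧
        (∃ u v : Ω, (G.induce Ω).dist u v = G.dist x y) := by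
  intro x y hxy
  have hcp' := hcp
  obtain ⟨hb0, hb1, hc, hbb⟩ := hcp'
  have R := TB.mkDR hconn D hD hdiam_le hdiam p hdr b α β hcp
  have H := TB.mkDat R hD hb0 hb1 hc hbb ha1 ha2
  have : G.dist x y = 0 ∨ G.dist x y = 1 ∨ G.dist x y = 2 ∨ G.dist x y = 3 := by omega
  rcases this with h | h | h | h
  · have hxy' : x = y := hconn.dist_eq_zero_iff.mp h
    subst hxy'
    exact TB.Cl.fin hconn (Ω := {x}) rfl rfl (by rw [h]; exact TB.exists_cl0 hconn x)
  · exact TB.Cl.fin hconn (Ω := {x, y}) (Or.inl rfl) (Or.inr rfl)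
      (by rw [h]; exact TB.exists_cl1 hconn H.tf (TB.adj_of h))
  · obtain ⟨Ω, h1, h2, h3⟩ := TB.exists_cl2 H h
    exact TB.Cl.fin hconn h1 h2 (by rw [h]; exact h3)
  · obtain ⟨Ω, h1, h2, h3⟩ := TB.exists_cl3 H h
    exact TB.Cl.fin hconn h1 h2 (by rw [h]; exact h3)
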